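/- arXiv:1603.07718 — 2 statements merged into one kernel-verified Lean document; each statement's English description precedes it below -/
import Mathlib

section
/- Let k ⊆ K ⊆ L be a tower of fields with [L:K] = [K:k] = 2 and L/k separable, and suppose K is the unique field strictly between k and L. Let β ∈ Kˣ with β ∉ N_{L/K}(Lˣ). Suppose there is a tower of finite separable field extensions k ⊆ E ⊆ E' with [E:k] odd and [E':E] = 2 such that the image of β in (K ⊗_k E')ˣ is a norm from (L ⊗_k E')ˣ. Then there exists a separable field extension F/k of degree 2 such that the image of β in (K ⊗_k F)ˣ is a norm from (L ⊗_k F)ˣ. -/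
open TensorProduct

/-- `β ∈ Kˣ` becomes a norm from `(L ⊗[k] F)ˣ` to `(K ⊗[k] F)ˣ`, where `L ⊗[k] F` is a
`(K ⊗[k] F)`-algebra via the map induced by the inclusion `K ⊆ L`. -/
def IsNormFrom (k K L F : Type) [Field k] [Field K] [Field L] [Field F]
    [Algebra k K] [Algebra k L] [Algebra K L] [IsScalarTower k K L] [Algebra k F]
    (β : K) : Prop :=
  letI : Algebra (K ⊗[k] F) (L ⊗[k] F) :=
    ((Algebra.TensorProduct.map (IsScalarTower.toAlgHom k K L) (AlgHom.id k F)).toRingHom).toAlgebra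
  ∃ x : (L ⊗[k] F)ˣ,
    Algebra.norm (K ⊗[k] F) (x : L ⊗[k] F) = (β : K) ⊗ₜ[k] (1 : F)

/-!
The field `F` makes `β` a norm iff it splits the quaternion algebra `Q = (L/K, β)` over `K`. If `Q`
is division, an element of `Q` outside `k` whose reduced trace `t` and reduced norm `n` both lie in
`k` provides such an `F`: take the extension of `k` generated by a root `α` of `X² - tX + n`, over
which subtracting `α` from the element makes its reduced norm vanish. The trace condition is linear;
the norm condition then says that the Albert form, a quadratic form of dimension 6 over `k`, is
isotropic. Over `E`, the form is isotropic because `Q ⊗ E` is split by the quadratic extension `E'`;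
by Springer's theorem it is isotropic over `k` as well. In characteristic two one still has to make
the resulting quadratic extension separable, by moving the element to one of trace `1`.
-/

open scoped QuadraticAlgebra

section Springer

open Polynomial

theorem exists_irreducible_odd_natDegree_dvd {k : Type*} [Field k] {f : k[X]}
    (hf : Odd f.natDegree) : ∃ p : k[X], Irreducible p ∧ Odd p.natDegree ∧ p ∣ f := by
  induction f using WfDvdMonoid.induction_on_irreducible with
  | zero => simp at hf
  | unit u hu => simp [natDegree_eq_zero_of_isUnit hu] at hf
  | mul g p hg hp ih =>
    rcases Nat.even_or_odd p.natDegree with hp_even | hp_odd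
    · rw [natDegree_mul hp.ne_zero hg, Nat.odd_add'] at hf
      obtain ⟨q, hq, hq_odd, hqg⟩ := ih (hf.2 hp_even)
      exact ⟨q, hq, hq_odd, hqg.mul_left p⟩
    · exact ⟨p, hp, hp_odd, dvd_mul_right p g⟩

variable {ι : Type*} [Fintype ι] [DecidableEq ι]

theorem toQuadraticForm'_apply {R : Type*} [CommRing R] (M : Matrix ι ι R) (v : ι → R) :
    M.toQuadraticForm' v = ∑ i, ∑ j, M i j * (v i * v j) := by
  simp [Matrix.toQuadraticForm', Matrix.toLinearMap₂'_apply, mul_comm, mul_left_comm]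

theorem map_toQuadraticForm' {R S : Type*} [CommRing R] [CommRing S] (φ : R →+* S)
    (M : Matrix ι ι R) (v : ι → R) :
    φ (M.toQuadraticForm' v) = (M.map φ).toQuadraticForm' (φ ∘ v) := by
  simp [toQuadraticForm'_apply]

theorem coeff_toQuadraticForm'_map_C {R : Type*} [CommRing R] (M : Matrix ι ι R) {v : ι → R[X]}
    {d : ℕ} (hd : ∀ i, (v i).natDegree ≤ d) :
    ((M.map C).toQuadraticForm' v).coeff (d + d) = M.toQuadraticForm' fun i => (v i).coeff d := by
  simp [toQuadraticForm'_apply, coeff_mul_add_eq_of_natDegree_le (hd _) (hd _)]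

theorem natDegree_toQuadraticForm'_map_C_le {R : Type*} [CommRing R] (M : Matrix ι ι R)
    {v : ι → R[X]} {d : ℕ} (hd : ∀ i, (v i).natDegree ≤ d) :
    ((M.map C).toQuadraticForm' v).natDegree ≤ d + d := by
  rw [toQuadraticForm'_apply]
  exact natDegree_sum_le_of_forall_le _ _ fun i _ => natDegree_sum_le_of_forall_le _ _ fun j _ =>
    (natDegree_C_mul_le _ _).trans (natDegree_mul_le_of_le (hd i) (hd j))

theorem exists_natDegree_toQuadraticForm'_map_C_eq {R : Type*} [CommRing R] {M : Matrix ι ι R}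
    (hM : M.toQuadraticForm'.Anisotropic) {v : ι → R[X]} (hv : v ≠ 0) :
    ∃ i, (M.map C).toQuadraticForm' v ≠ 0 ∧
      ((M.map C).toQuadraticForm' v).natDegree = (v i).natDegree + (v i).natDegree := by
  obtain ⟨j, hj⟩ := Function.ne_iff.1 hv
  obtain ⟨i, -, hmax⟩ := Finset.univ.exists_max_image (fun i => (v i).degree) ⟨j, Finset.mem_univ j⟩
  have hi : v i ≠ 0 := fun h => hj (degree_eq_bot.1 (by simpa [h] using hmax j (Finset.mem_univ j)))
  have hle (l : ι) : (v l).natDegree ≤ (v i).natDegree :=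
    natDegree_le_natDegree (hmax l (Finset.mem_univ l))
  have hcoeff : ((M.map C).toQuadraticForm' v).coeff ((v i).natDegree + (v i).natDegree) ≠ 0 := by
    rw [coeff_toQuadraticForm'_map_C M hle]
    exact fun h => leadingCoeff_ne_zero.2 hi (congrFun (hM _ h) i)
  exact ⟨i, fun h => hcoeff (by simp [h]),
    natDegree_eq_of_le_of_coeff_ne_zero (natDegree_toQuadraticForm'_map_C_le M hle) hcoeff⟩

theorem exists_primitive_dvd_toQuadraticForm' {k : Type*} [Field k] {M : Matrix ι ι k[X]}
    {f : k[X]} (hf : Irreducible f) {v : ι → k[X]} (hv : ¬ ∀ i, f ∣ v i)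
    (hdvd : f ∣ M.toQuadraticForm' v) :
    ∃ w : ι → k[X], (∀ i, (w i).natDegree < f.natDegree) ∧ (∀ p, (∀ i, p ∣ w i) → IsUnit p) ∧
      f ∣ M.toQuadraticForm' w := by
  classical
  obtain ⟨i₀, hi₀⟩ := not_forall.1 hv
  obtain ⟨w, hw, hgcd⟩ := Finset.extract_gcd (s := Finset.univ) (fun i => v i % f)
    ⟨i₀, Finset.mem_univ i₀⟩
  set g := Finset.univ.gcd (fun i => v i % f)
  replace hw (i : ι) : v i % f = g * w i := hw i (Finset.mem_univ i)
  have hfg : ¬ f ∣ g := fun h => hi₀ <|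
    (EuclideanDomain.dvd_mod_iff dvd_rfl).1 (hw i₀ ▸ h.mul_right (w i₀))
  refine ⟨w, fun i => ?_, fun p hp => ?_, ?_⟩
  · rcases eq_or_ne (w i) 0 with h0 | h0
    · simpa [h0] using hf.natDegree_pos
    · have hlt := natDegree_mod_lt (v i) hf.natDegree_pos.ne'
      have hg : g ≠ 0 := fun h => hfg (h ▸ dvd_zero f)
      rw [hw, natDegree_mul hg h0] at hlt
      omega
  · exact isUnit_of_dvd_one (hgcd ▸ Finset.dvd_gcd fun i _ => hp i)
  · have hmod : AdjoinRoot.mk f ∘ v = AdjoinRoot.mk f ∘ (g • w) := funext fun i => by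
      refine AdjoinRoot.mk_eq_mk.2 ?_
      simp only [Pi.smul_apply, smul_eq_mul, ← hw, EuclideanDomain.mod_eq_sub_mul_div,
        sub_sub_cancel, dvd_mul_right]
    rw [← AdjoinRoot.mk_eq_zero, map_toQuadraticForm', hmod, ← map_toQuadraticForm',
      AdjoinRoot.mk_eq_zero, QuadraticMap.map_smul, smul_eq_mul] at hdvd
    exact (hf.prime.dvd_or_dvd hdvd).resolve_left fun h =>
      hfg ((hf.prime.dvd_or_dvd h).elim id id)

theorem dvd_of_dvd_toQuadraticForm'_map_C {k : Type*} [Field k] {M : Matrix ι ι k}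
    (hM : M.toQuadraticForm'.Anisotropic) {f : k[X]} (hf : Irreducible f)
    (hodd : Odd f.natDegree) {v : ι → k[X]} (hdvd : f ∣ (M.map C).toQuadraticForm' v) :
    ∀ i, f ∣ v i := by
  induction hn : f.natDegree using Nat.strong_induction_on generalizing f v with
  | _ n IH =>
  by_contra hv
  obtain ⟨w, hlt, hprim, h, hh⟩ := exists_primitive_dvd_toQuadraticForm' hf hv hdvd
  have hw : w ≠ 0 := fun h0 => not_isUnit_zero (hprim 0 (by simp [h0]))
  obtain ⟨i, hne, hdeg⟩ := exists_natDegree_toQuadraticForm'_map_C_eq hM hw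
  have hh0 : h ≠ 0 := fun h0 => hne (by rw [hh, h0, mul_zero])
  rw [hh, natDegree_mul hf.ne_zero hh0] at hdeg
  have hh_odd : Odd h.natDegree := by grind
  obtain ⟨p, hp, hp_odd, hph⟩ := exists_irreducible_odd_natDegree_dvd hh_odd
  have hp_lt : p.natDegree < n := by
    have := natDegree_le_of_dvd hph hh0
    have := hlt i
    omega
  exact hp.not_isUnit (hprim p (IH _ hp_lt hp hp_odd (hh ▸ hph.mul_left f) rfl))

theorem anisotropic_map_algebraMap_of_odd_dim {k E : Type*} [Field k] [Field E] [Algebra k E]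
    (pb : PowerBasis k E) (hE : Odd pb.dim) {M : Matrix ι ι k}
    (hM : M.toQuadraticForm'.Anisotropic) :
    (M.map (algebraMap k E)).toQuadraticForm'.Anisotropic := by
  intro v hv
  choose p hp using fun i => pb.exists_eq_aeval' (v i)
  obtain rfl : v = aeval pb.gen ∘ p := funext hp
  have := pb.finite
  have hint : IsIntegral k pb.gen := .of_finite k pb.gen
  have hmap : (M.map C).map (aeval pb.gen : k[X] →ₐ[k] E) = M.map (algebraMap k E) := by
    ext
    simp
  have hdvd : minpoly k pb.gen ∣ (M.map C).toQuadraticForm' p := by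
    rw [minpoly.dvd_iff, ← hv, ← hmap]
    exact map_toQuadraticForm' (aeval pb.gen).toRingHom (M.map C) p
  funext i
  exact (minpoly.dvd_iff).1 (dvd_of_dvd_toQuadraticForm'_map_C hM (minpoly.irreducible hint)
    (by rwa [pb.natDegree_minpoly]) hdvd i)

theorem anisotropic_map_ringEquiv {R S : Type*} [CommRing R] [CommRing S] (e : R ≃+* S)
    {M : Matrix ι ι R} (hM : M.toQuadraticForm'.Anisotropic) :
    (M.map e).toQuadraticForm'.Anisotropic := by
  intro v hv
  obtain ⟨w, rfl⟩ := e.surjective.comp_left v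
  have h : e (M.toQuadraticForm' w) = 0 := (map_toQuadraticForm' e.toRingHom M w).trans hv
  rw [hM w (e.map_eq_zero_iff.1 h)]
  ext
  simp

open IntermediateField in
/-- Springer's theorem. -/
theorem anisotropic_map_algebraMap_of_odd_finrank {k E : Type*} [Field k] [Field E] [Algebra k E]
    (hE : Odd (Module.finrank k E)) {M : Matrix ι ι k} (hM : M.toQuadraticForm'.Anisotropic) :
    (M.map (algebraMap k E)).toQuadraticForm'.Anisotropic := by
  have : FiniteDimensional k E := .of_finrank_pos hE.pos
  have key (F : IntermediateField k E) : (M.map (algebraMap k F)).toQuadraticForm'.Anisotropic := by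
    induction F using induction_on_adjoin with
    | base => exact anisotropic_map_ringEquiv (botEquiv k E).symm.toRingEquiv hM
    | ih F x hF =>
      have hx : Odd (Module.finrank F F⟮x⟯) := hE.of_dvd_nat <|
        (Dvd.intro _ (Module.finrank_mul_finrank F F⟮x⟯ E)).trans
          (Dvd.intro_left _ (Module.finrank_mul_finrank k F E))
      let pb := adjoin.powerBasis (IsIntegral.of_finite F x)
      have := anisotropic_map_algebraMap_of_odd_dim pb (pb.finrank ▸ hx) hF
      rwa [Matrix.map_map, ← RingHom.coe_comp, ← IsScalarTower.algebraMap_eq] at this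
  have hmap : (M.map (algebraMap k (⊤ : IntermediateField k E))).map
      (topEquiv : (⊤ : IntermediateField k E) ≃ₐ[k] E).toRingEquiv = M.map (algebraMap k E) := by
    ext
    simp
  exact hmap ▸ anisotropic_map_ringEquiv topEquiv.toRingEquiv (key ⊤)

end Springer

section QuadraticAlgebra

variable {R S : Type*} [CommRing R] [CommRing S]

/-- The quadratic algebra `R[ω]`, `ω² = a + bω`, as a presentation of an `R`-algebra with a basis
`1, c` such that `c² = a + bc`. -/
noncomputable def quadraticAlgebraEquivOfBasis [Algebra R S] (c : Module.Basis (Fin 2) R S)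
    (hc : c 0 = 1) {a b : R} (hab : c 1 * c 1 = a • 1 + b • c 1) :
    QuadraticAlgebra R a b ≃ₐ[R] S :=
  AlgEquiv.ofBijective (QuadraticAlgebra.lift ⟨c 1, hab⟩) <| by
    have h : ⇑(QuadraticAlgebra.lift ⟨c 1, hab⟩ : QuadraticAlgebra R a b →ₐ[R] S) =
        (QuadraticAlgebra.linearEquivTuple a b).trans c.equivFun.symm :=
      funext fun z => by simp [hc, Module.Basis.equivFun_symm_apply]
    exact h ▸ LinearEquiv.bijective _

variable {a b : R}

theorem norm_algEquiv_quadraticAlgebra [Algebra R S] (e : QuadraticAlgebra R a b ≃ₐ[R] S)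
    (z : QuadraticAlgebra R a b) : Algebra.norm R (e z) = z.norm := by
  rw [Algebra.norm_eq_of_algEquiv, Algebra.norm_apply]
  exact QuadraticAlgebra.det_toLinearMap_eq_norm z

theorem exists_norm_eq_of_ringHom (f : R →+* S) {β : R}
    (h : ∃ z : QuadraticAlgebra R a b, z.norm = β) :
    ∃ z : QuadraticAlgebra S (f a) (f b), z.norm = f β := by
  obtain ⟨z, rfl⟩ := h
  exact ⟨⟨f z.re, f z.im⟩, by simp [QuadraticAlgebra.norm_def]⟩

theorem norm_add_smul (x y : QuadraticAlgebra R a b) (r : R) :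
    (x + r • y).norm = x.norm + r * (x * star y).trace + r ^ 2 * y.norm := by
  simp only [QuadraticAlgebra.norm_def, QuadraticAlgebra.trace_def, QuadraticAlgebra.re_add,
    QuadraticAlgebra.im_add, QuadraticAlgebra.re_smul, QuadraticAlgebra.im_smul,
    QuadraticAlgebra.re_mul, QuadraticAlgebra.im_mul, QuadraticAlgebra.re_star,
    QuadraticAlgebra.im_star, smul_eq_mul]
  ring

theorem norm_sub_algebraMap (y : QuadraticAlgebra R a b) (r : R) :
    (y - algebraMap R _ r).norm = y.norm - r * y.trace + r ^ 2 := by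
  simp only [QuadraticAlgebra.norm_def, QuadraticAlgebra.trace_def, QuadraticAlgebra.re_sub,
    QuadraticAlgebra.im_sub, QuadraticAlgebra.algebraMap_re, QuadraticAlgebra.algebraMap_im]
  ring

theorem exists_norm_eq_of_norm_eq_zero {v : QuadraticAlgebra R a b} (hv : v.norm = 0)
    (ht : IsUnit v.trace) (β : R) : ∃ z : QuadraticAlgebra R a b, z.norm = β := by
  obtain ⟨u, hu⟩ := ht.exists_right_inv
  refine ⟨1 + ((β - 1) * u) • star v, ?_⟩
  rw [norm_add_smul, QuadraticAlgebra.norm_star, hv, map_one, star_star, one_mul]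
  linear_combination (β - 1) * hu

theorem exists_norm_eq_of_norm_eq_mul_norm {β : R} {y z : QuadraticAlgebra R a b}
    (hz : IsUnit z.norm) (h : y.norm = β * z.norm) :
    ∃ x : QuadraticAlgebra R a b, x.norm = β := by
  obtain ⟨w, hw⟩ := (QuadraticAlgebra.isUnit_iff_norm_isUnit.2 hz).exists_right_inv
  exact ⟨y * w, by rw [map_mul, h, mul_assoc, ← map_mul, hw, map_one, mul_one]⟩

end QuadraticAlgebra

theorem mem_range_algebraMap_of_sq_mem_range {k K : Type*} [Field k] [Field K] [Algebra k K]
    [Algebra.IsSeparable k K] (h2 : (2 : k) = 0) {x : K} (hx : x ^ 2 ∈ (algebraMap k K).range) :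
    x ∈ (algebraMap k K).range := by
  have : CharP k 2 := CharTwo.of_one_ne_zero_of_two_eq_zero one_ne_zero h2
  have : ExpChar k 2 := .prime Nat.prime_two
  have hmem : x ∈ perfectClosure k K := (mem_perfectClosure_iff_pow_mem 2).2 ⟨1, by simpa using hx⟩
  rwa [perfectClosure.eq_bot_of_isSeparable, IntermediateField.mem_bot] at hmem

theorem exists_notMem_range_algebraMap {k K : Type*} [Field k] [Field K] [Algebra k K]
    (h : Module.finrank k K ≠ 1) : ∃ x : K, x ∉ (algebraMap k K).range := by
  by_contra! hx
  exact h (Subalgebra.bot_eq_top_iff_finrank_eq_one.1 (Algebra.eq_top_iff.2 hx))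

theorem exists_basis_of_notMem_range_algebraMap {k K : Type*} [Field k] [Field K] [Algebra k K]
    (h : Module.finrank k K = 2) {x : K} (hx : x ∉ (algebraMap k K).range) :
    ∃ c : Module.Basis (Fin 2) k K, c 0 = 1 ∧ c 1 = x := by
  have hli : LinearIndependent k ![1, x] :=
    (LinearIndependent.pair_iff' one_ne_zero).2 fun r hr =>
      hx ⟨r, by rw [← hr, Algebra.algebraMap_eq_smul_one]⟩
  exact ⟨basisOfLinearIndependentOfCardEqFinrank hli (by simp [h]), by simp, by simp⟩

theorem exists_basis_zero_eq_one {k K : Type*} [Field k] [Field K] [Algebra k K]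
    (h : Module.finrank k K = 2) : ∃ c : Module.Basis (Fin 2) k K, c 0 = 1 := by
  obtain ⟨x, hx⟩ := exists_notMem_range_algebraMap (k := k) (K := K) (by omega)
  obtain ⟨c, hc, -⟩ := exists_basis_of_notMem_range_algebraMap h hx
  exact ⟨c, hc⟩

theorem exists_mul_self_eq_smul_one_add_smul {R S : Type*} [CommRing R] [CommRing S] [Algebra R S]
    (c : Module.Basis (Fin 2) R S) (hc : c 0 = 1) :
    ∃ a b : R, c 1 * c 1 = a • 1 + b • c 1 :=
  ⟨c.repr (c 1 * c 1) 0, c.repr (c 1 * c 1) 1, by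
    rw [← hc, ← Fin.sum_univ_two (fun i => c.repr (c 1 * c 1) i • c i), c.sum_repr]⟩

theorem exists_basis_mul_self_eq_smul_one_add {k K : Type*} [Field k] [Field K] [Algebra k K]
    [Algebra.IsSeparable k K] (h : Module.finrank k K = 2) :
    ∃ (c : Module.Basis (Fin 2) k K) (a : k), c 0 = 1 ∧ c 1 * c 1 = a • 1 + (1 : k) • c 1 := by
  obtain ⟨x, hx⟩ := exists_notMem_range_algebraMap (k := k) (K := K) (by omega)
  obtain ⟨c, hc, rfl⟩ := exists_basis_of_notMem_range_algebraMap h hx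
  obtain ⟨p, q, hpq⟩ := exists_mul_self_eq_smul_one_add_smul c hc
  obtain ⟨r, s, hs, htr⟩ : ∃ r s : k, s ≠ 0 ∧ 2 * r + q * s = 1 := by
    by_cases hq : q = 0
    · have h2 : (2 : k) ≠ 0 := fun h2 => hx <| mem_range_algebraMap_of_sq_mem_range h2
        ⟨p, by rw [sq, hpq, hq, zero_smul, add_zero, Algebra.algebraMap_eq_smul_one]⟩
      exact ⟨2⁻¹, 1, one_ne_zero, by simp [hq, h2]⟩
    · exact ⟨0, q⁻¹, inv_ne_zero hq, by simp [hq]⟩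
  have hy : r • 1 + s • c 1 ∉ (algebraMap k K).range := by
    rintro ⟨t, ht⟩
    have := congrArg (c.coord 1) ht
    rw [Algebra.algebraMap_eq_smul_one, ← hc] at this
    simp [hs.symm] at this
  obtain ⟨c', hc'₀, hc'₁⟩ := exists_basis_of_notMem_range_algebraMap h hy
  refine ⟨c', r ^ 2 + s ^ 2 * p - r, hc'₀, ?_⟩
  have htr' := congrArg (algebraMap k K) htr
  simp only [Algebra.smul_def, map_add, map_sub, map_mul, map_pow, map_one, map_ofNat, mul_one,
    one_mul, hc'₁] at hpq htr' ⊢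
  linear_combination algebraMap k K s ^ 2 * hpq + algebraMap k K s * c 1 * htr'

section NormForm

variable {k K L F : Type*} [Field k] [Field K] [Field L] [Field F] [Algebra k K] [Algebra k L]
  [Algebra K L] [IsScalarTower k K L] [Algebra k F]

theorem exists_basis_tensorProduct [Algebra (K ⊗[k] F) (L ⊗[k] F)]
    (halg : algebraMap (K ⊗[k] F) (L ⊗[k] F) =
      (Algebra.TensorProduct.map (IsScalarTower.toAlgHom k K L) (AlgHom.id k F)).toRingHom)
    {ι : Type*} (c : Module.Basis ι K L) :
    ∃ c' : Module.Basis ι (K ⊗[k] F) (L ⊗[k] F), ∀ i, c' i = c i ⊗ₜ 1 := by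
  have : IsScalarTower K (K ⊗[k] F) (L ⊗[k] F) := .of_algebraMap_eq fun x => by
    simp [halg, Algebra.TensorProduct.algebraMap_apply]
  have : Algebra.IsPushout K L (K ⊗[k] F) (L ⊗[k] F) :=
    .tensorProduct_tensorProduct k F K L (by ext f; simp [halg])
  exact ⟨this.symm.out.basis c, fun i => IsBaseChange.basis_apply ..⟩

theorem nonempty_quadraticAlgebra_algEquiv_tensorProduct [Algebra (K ⊗[k] F) (L ⊗[k] F)]
    (halg : algebraMap (K ⊗[k] F) (L ⊗[k] F) =
      (Algebra.TensorProduct.map (IsScalarTower.toAlgHom k K L) (AlgHom.id k F)).toRingHom)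
    {c : Module.Basis (Fin 2) K L} (hc : c 0 = 1) {a b : K} (hab : c 1 * c 1 = a • 1 + b • c 1) :
    Nonempty (QuadraticAlgebra (K ⊗[k] F) (algebraMap K _ a) (algebraMap K _ b) ≃ₐ[K ⊗[k] F]
      L ⊗[k] F) := by
  obtain ⟨c', hc'⟩ := exists_basis_tensorProduct (F := F) halg c
  have hmap (x : K) : algebraMap (K ⊗[k] F) (L ⊗[k] F) (algebraMap K _ x) =
      algebraMap K L x ⊗ₜ 1 := by
    simp [halg, Algebra.TensorProduct.algebraMap_apply]
  refine ⟨quadraticAlgebraEquivOfBasis c' (by rw [hc', hc, Algebra.TensorProduct.one_def]) ?_⟩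
  simp only [Algebra.smul_def, hmap, hc', Algebra.TensorProduct.tmul_mul_tmul, hab,
    TensorProduct.add_tmul, mul_one, Algebra.TensorProduct.one_def]

theorem isNormFrom_iff {k K L F : Type} [Field k] [Field K] [Field L] [Field F] [Algebra k K]
    [Algebra k L] [Algebra K L] [IsScalarTower k K L] [Algebra k F]
    {c : Module.Basis (Fin 2) K L} (hc : c 0 = 1) {a : K}
    (ha : c 1 * c 1 = a • 1 + (1 : K) • c 1) {β : K} (hβ : β ≠ 0) :
    IsNormFrom k K L F β ↔ ∃ z : QuadraticAlgebra (K ⊗[k] F) (algebraMap K _ a) 1,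
      z.norm = algebraMap K (K ⊗[k] F) β := by
  let _ : Algebra (K ⊗[k] F) (L ⊗[k] F) :=
    ((Algebra.TensorProduct.map (IsScalarTower.toAlgHom k K L) (AlgHom.id k F)).toRingHom).toAlgebra
  obtain ⟨e'⟩ := nonempty_quadraticAlgebra_algEquiv_tensorProduct (k := k) (F := F) rfl hc ha
  rw [map_one] at e'
  constructor
  · rintro ⟨x, hx⟩
    exact ⟨e'.symm x, by rw [← norm_algEquiv_quadraticAlgebra e', e'.apply_symm_apply]; exact hx⟩
  · rintro ⟨z, hz⟩
    have hunit : IsUnit z := QuadraticAlgebra.isUnit_iff_norm_isUnit.2 <|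
      hz ▸ (IsUnit.mk0 β hβ).map (algebraMap K _)
    exact ⟨(hunit.map e').unit, (norm_algEquiv_quadraticAlgebra e' z).trans hz⟩

end NormForm

section Field

theorem isField_tensorProduct_of_coprime_finrank {k L E : Type*} [Field k] [Field L] [Field E]
    [Algebra k L] [Algebra k E]
    (h : (Module.finrank k L).Coprime (Module.finrank k E)) : IsField (L ⊗[k] E) :=
  IntermediateField.LinearDisjoint.isField_of_forall k L E fun _ _ _ f g =>
    .of_finrank_coprime <| by
      rwa [(AlgEquiv.ofInjectiveField f).toLinearEquiv.finrank_eq,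
        (AlgEquiv.ofInjectiveField g).toLinearEquiv.finrank_eq] at h

theorem isField_quadraticAlgebra_tensorProduct {k K L E : Type*} [Field k] [Field K] [Field L]
    [Field E] [Algebra k K] [Algebra k L] [Algebra K L] [IsScalarTower k K L] [Algebra k E]
    {c : Module.Basis (Fin 2) K L} (hc : c 0 = 1) {a : K} (ha : c 1 * c 1 = a • 1 + (1 : K) • c 1)
    (h : (Module.finrank k L).Coprime (Module.finrank k E)) :
    IsField (QuadraticAlgebra (K ⊗[k] E) (algebraMap K _ a) 1) := by
  let _ : Algebra (K ⊗[k] E) (L ⊗[k] E) :=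
    ((Algebra.TensorProduct.map (IsScalarTower.toAlgHom k K L) (AlgHom.id k E)).toRingHom).toAlgebra
  obtain ⟨e⟩ := nonempty_quadraticAlgebra_algEquiv_tensorProduct (k := k) (F := E) rfl hc ha
  rw [map_one] at e
  exact e.toMulEquiv.isField (isField_tensorProduct_of_coprime_finrank h)

end Field

section Descent

/-- The element `y + z j` of the quaternion algebra `S[θ] ⊕ S[θ] j`, where `θ² = a + θ` and
`j² = β`, is quadratic over `R`: it is not in `R`, and its reduced trace `tr y` and its reduced norm
`N y - β N z` are. -/
structure IsQuadraticOver (R : Type*) {S : Type*} [CommRing R] [CommRing S] [Algebra R S] {a : S}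
    (β : S) (y z : QuadraticAlgebra S a 1) : Prop where
  trace_mem : y.trace ∈ (algebraMap R S).range
  norm_mem : y.norm - β * z.norm ∈ (algebraMap R S).range
  notMem_of_eq_zero : z = 0 → y ∉ (algebraMap R (QuadraticAlgebra S a 1)).range

variable {E H : Type*} [CommRing E] [CommRing H] [Algebra E H] {a : H}

theorem norm_quadraticAlgebra_quadraticAlgebra {ν τ : H} (u v : QuadraticAlgebra H a 1) :
    (⟨⟨u.re, v.re⟩, ⟨u.im, v.im⟩⟩ : QuadraticAlgebra (QuadraticAlgebra H ν τ)
      (algebraMap H _ a) 1).norm = ⟨u.norm + ν * v.norm, (u * star v).trace + τ * v.norm⟩ := by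
  ext
  · simp only [QuadraticAlgebra.norm_def, QuadraticAlgebra.mk_mul_mk, one_mul,
      QuadraticAlgebra.re_sub, QuadraticAlgebra.re_add, QuadraticAlgebra.re_mul,
      QuadraticAlgebra.algebraMap_re, QuadraticAlgebra.algebraMap_im, mul_zero, zero_mul, add_zero,
      QuadraticAlgebra.im_mul]
    ring
  · simp only [QuadraticAlgebra.norm_def, QuadraticAlgebra.mk_mul_mk, one_mul,
      QuadraticAlgebra.im_sub, QuadraticAlgebra.im_add, QuadraticAlgebra.im_mul,
      QuadraticAlgebra.re_mul, QuadraticAlgebra.algebraMap_re, QuadraticAlgebra.algebraMap_im,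
      mul_zero, zero_mul, add_zero, QuadraticAlgebra.trace_def, QuadraticAlgebra.re_star,
      QuadraticAlgebra.im_star, mul_neg]
    ring

theorem exists_isQuadraticOver_of_norm_eq (hΛ : IsField (QuadraticAlgebra H a 1)) {ν τ : E}
    {β : H} (hβ : β ≠ 0)
    (h : ∃ z : QuadraticAlgebra (QuadraticAlgebra H (algebraMap E H ν) (algebraMap E H τ))
      (algebraMap H _ a) 1, z.norm = algebraMap H _ β) :
    ∃ y z : QuadraticAlgebra H a 1, IsQuadraticOver E β y z := by
  have := hΛ.isDomain
  obtain ⟨⟨⟨x₁, x₂⟩, ⟨x₃, x₄⟩⟩, hx⟩ := h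
  let u : QuadraticAlgebra H a 1 := ⟨x₁, x₃⟩
  let v : QuadraticAlgebra H a 1 := ⟨x₂, x₄⟩
  have hnorm := (norm_quadraticAlgebra_quadraticAlgebra u v).symm.trans hx
  have hre : u.norm + algebraMap E H ν * v.norm = β := congrArg QuadraticAlgebra.re hnorm
  have him : (u * star v).trace + algebraMap E H τ * v.norm = 0 :=
    congrArg QuadraticAlgebra.im hnorm
  by_cases hv : v = 0
  · -- `β = N u` is already a norm: `β δ + u δ j`, with `δ = 1 - 2θ` of trace `0`, is nilpotent.
    let δ : QuadraticAlgebra H a 1 := ⟨1, -2⟩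
    have hu : u.norm = β := by simpa [hv] using hre
    refine ⟨β • δ, u * δ, ⟨0, by simp [δ, QuadraticAlgebra.trace_def, mul_comm]⟩, ⟨0, ?_⟩,
      fun h0 => ?_⟩
    · rw [map_zero, Algebra.smul_def, map_mul, map_mul, QuadraticAlgebra.norm_algebraMap, hu]
      ring
    · rcases mul_eq_zero.1 h0 with hu0 | hδ
      · exact (hβ (by rw [← hu, hu0, QuadraticAlgebra.norm_zero])).elim
      · have h10 : (1 : H) = 0 := congrArg QuadraticAlgebra.re hδ
        exact (hβ (by rw [← mul_one β, h10, mul_zero])).elim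
  · -- `v⁻¹ (j - u)` satisfies the equation `X² = ν + τ X` that defines the quadratic extension.
    obtain ⟨w, hw⟩ := hΛ.mul_inv_cancel hv
    have hNw : v.norm * w.norm = 1 := by rw [← map_mul, hw, map_one]
    have hw' : w = w.norm • star v := by
      rw [Algebra.smul_def, QuadraticAlgebra.algebraMap_norm_eq_mul_star, mul_assoc, ← star_mul,
        hw, star_one, mul_one]
    refine ⟨-(u * w), w, ⟨τ, ?_⟩, ⟨-ν, ?_⟩, fun h0 => ?_⟩
    · rw [hw', mul_smul_comm, map_neg, map_smul, smul_eq_mul]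
      linear_combination (-algebraMap E H τ) * hNw + w.norm * him
    · rw [map_neg, QuadraticAlgebra.norm_neg, map_mul]
      linear_combination algebraMap E H ν * hNw - w.norm * hre
    · simp [h0] at hw

theorem nonempty_tensorProduct_algHom_quadraticAlgebra {k K E E' H : Type*} [CommRing k]
    [CommRing K] [CommRing E] [CommRing E'] [CommRing H] [Algebra k K] [Algebra k E] [Algebra E E']
    [Algebra k E'] [IsScalarTower k E E'] [Algebra K H] [Algebra E H] [Algebra k H]
    [IsScalarTower k K H] [IsScalarTower k E H] {ν τ : E} (e : QuadraticAlgebra E ν τ ≃ₐ[E] E') :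
    Nonempty (K ⊗[k] E' →ₐ[K] QuadraticAlgebra H (algebraMap E H ν) (algebraMap E H τ)) :=
  let f : QuadraticAlgebra E ν τ →ₐ[E] QuadraticAlgebra H (algebraMap E H ν) (algebraMap E H τ) :=
    QuadraticAlgebra.lift ⟨ω, by
      rw [QuadraticAlgebra.omega_mul_omega_eq_add, algebraMap_smul, algebraMap_smul]⟩
  ⟨Algebra.TensorProduct.lift (Algebra.ofId K _) ((f.comp e.symm.toAlgHom).restrictScalars k)
    fun _ _ => .all _ _⟩

end Descent

section Albert

variable {R S : Type*} [CommRing R] [CommRing S] [Algebra R S]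

/-- The matrix of the quadratic form `N y - β N z` in `w`, where `y = w₁η + (w₀ - 2w₁η)θ` is an
element of `S[θ]`, `θ² = a + θ`, of trace `w₀`, and `z = w₂ + w₃η + (w₄ + w₅η)θ`. When `1, η` is a
basis of `S` over `R`, its `η`-coordinate is an Albert form over `R`, whose isotropy detects the
elements of the quaternion algebra `S[θ] ⊕ S[θ] j` that are quadratic over `R`. -/
def albertMatrix (η a β : S) : Matrix (Fin 6) (Fin 6) S :=
  !![-a, (1 + 4 * a) * η, 0, 0, 0, 0;
    0, -(1 + 4 * a) * η ^ 2, 0, 0, 0, 0;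
    0, 0, -β, -β * η, -β, -β * η;
    0, 0, -β * η, -β * η ^ 2, -β * η, -β * η ^ 2;
    0, 0, 0, 0, a * β, a * β * η;
    0, 0, 0, 0, a * β * η, a * β * η ^ 2]

theorem albertMatrix_map {T : Type*} [CommRing T] (f : S →+* T) (η a β : S) :
    (albertMatrix η a β).map f = albertMatrix (f η) (f a) (f β) := by
  ext i j
  fin_cases i <;> fin_cases j <;> simp [albertMatrix, map_ofNat f 4]

theorem toQuadraticForm'_albertMatrix (η a β : S) (w : Fin 6 → S) :
    (albertMatrix η a β).toQuadraticForm' w =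
      (⟨w 1 * η, w 0 - 2 * (w 1 * η)⟩ : QuadraticAlgebra S a 1).norm -
        β * (⟨w 2 + w 3 * η, w 4 + w 5 * η⟩ : QuadraticAlgebra S a 1).norm := by
  simp only [albertMatrix, toQuadraticForm'_apply, Matrix.of_apply, Matrix.cons_val',
    Matrix.cons_val_fin_one, Fin.sum_univ_six, Fin.isValue, Matrix.cons_val_zero,
    Matrix.cons_val_one, Matrix.cons_val, zero_mul, add_zero, zero_add, QuadraticAlgebra.norm_def]
  ring

theorem toQuadraticForm'_map_linearMap {ι : Type*} [Fintype ι] [DecidableEq ι] (φ : S →ₗ[R] R)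
    (M : Matrix ι ι S) (w : ι → R) :
    (M.map φ).toQuadraticForm' w = φ (M.toQuadraticForm' (algebraMap R S ∘ w)) := by
  simp only [toQuadraticForm'_apply, map_sum, Matrix.map_apply, Function.comp_apply, ← map_mul]
  refine Finset.sum_congr rfl fun i _ => Finset.sum_congr rfl fun j _ => ?_
  rw [mul_comm (M i j), ← Algebra.smul_def, map_smul, smul_eq_mul, mul_comm]

theorem IsQuadraticOver.sub_algebraMap {a β : S} {y z : QuadraticAlgebra S a 1}
    (h : IsQuadraticOver R β y z) (r : R) :
    IsQuadraticOver R β (y - algebraMap R _ r) z := by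
  obtain ⟨⟨t, ht⟩, ⟨n, hn⟩, hyz⟩ := h
  refine ⟨⟨t - 2 * r, ?_⟩, ⟨n - r * t + r ^ 2, ?_⟩, fun hz ⟨s, hs⟩ => hyz hz ⟨s + r, ?_⟩⟩
  · rw [IsScalarTower.algebraMap_apply R S (QuadraticAlgebra S a 1), map_sub, map_sub,
      QuadraticAlgebra.trace_algebraMap, ← ht, map_mul, map_ofNat]
  · rw [IsScalarTower.algebraMap_apply R S (QuadraticAlgebra S a 1), norm_sub_algebraMap, ← ht]
    simp only [map_add, map_sub, map_mul, map_pow, hn]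
    ring
  · rw [map_add, hs, sub_add_cancel]

variable (b : Module.Basis (Fin 2) R S)

theorem algebraMap_coord_zero_add_algebraMap_coord_one_mul (hb : b 0 = 1) (x : S) :
    algebraMap R S (b.coord 0 x) + algebraMap R S (b.coord 1 x) * b 1 = x := by
  conv_rhs => rw [← b.sum_repr x]
  simp [hb, Algebra.smul_def]

theorem coord_one_algebraMap (hb : b 0 = 1) (r : R) : b.coord 1 (algebraMap R S r) = 0 := by
  simp [Algebra.algebraMap_eq_smul_one, ← hb]

theorem mem_range_algebraMap_iff_coord_one_eq_zero (hb : b 0 = 1) {x : S} :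
    x ∈ (algebraMap R S).range ↔ b.coord 1 x = 0 := by
  refine ⟨fun ⟨r, hr⟩ => hr ▸ coord_one_algebraMap b hb r, fun h => ⟨b.coord 0 x, ?_⟩⟩
  simpa [h] using algebraMap_coord_zero_add_algebraMap_coord_one_mul b hb x

theorem eq_zero_of_algebraMap_add_algebraMap_mul_eq_zero (hb : b 0 = 1) {r s : R}
    (h : algebraMap R S r + algebraMap R S s * b 1 = 0) : r = 0 ∧ s = 0 := by
  have := Fintype.linearIndependent_iff.1 b.linearIndependent ![r, s]
    (by simpa [hb, Algebra.smul_def] using h)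
  exact ⟨this 0, this 1⟩

theorem exists_sub_algebraMap_eq (hb : b 0 = 1) {a : S} (y : QuadraticAlgebra S a 1) :
    ∃ r s : R, y - algebraMap R _ r = ⟨algebraMap R S s * b 1,
      (y - algebraMap R _ r).trace - 2 * (algebraMap R S s * b 1)⟩ := by
  have hre : (y - algebraMap R _ (b.coord 0 y.re)).re = algebraMap R S (b.coord 1 y.re) * b 1 := by
    rw [QuadraticAlgebra.re_sub, IsScalarTower.algebraMap_apply R S (QuadraticAlgebra S a 1),
      QuadraticAlgebra.algebraMap_re]
    exact sub_eq_of_eq_add' (algebraMap_coord_zero_add_algebraMap_coord_one_mul b hb y.re).symm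
  refine ⟨b.coord 0 y.re, b.coord 1 y.re, QuadraticAlgebra.ext hre ?_⟩
  rw [QuadraticAlgebra.trace_def, hre, one_mul, add_sub_cancel_left]

theorem IsQuadraticOver.not_anisotropic (hb : b 0 = 1) {a β : S} {y z : QuadraticAlgebra S a 1}
    (h : IsQuadraticOver R β y z) :
    ¬ ((albertMatrix (b 1) a β).map (b.coord 1)).toQuadraticForm'.Anisotropic := by
  intro haniso
  obtain ⟨r, s, hy⟩ := exists_sub_algebraMap_eq b hb y
  obtain ⟨⟨t, ht⟩, hnorm, hyz⟩ := h.sub_algebraMap r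
  have hz : z = ⟨algebraMap R S (b.coord 0 z.re) + algebraMap R S (b.coord 1 z.re) * b 1,
      algebraMap R S (b.coord 0 z.im) + algebraMap R S (b.coord 1 z.im) * b 1⟩ := by
    ext <;> exact (algebraMap_coord_zero_add_algebraMap_coord_one_mul b hb _).symm
  let w : Fin 6 → R := ![t, s, b.coord 0 z.re, b.coord 1 z.re, b.coord 0 z.im, b.coord 1 z.im]
  rw [← ht] at hy
  have hw : w = 0 := haniso w <| by
    rw [toQuadraticForm'_map_linearMap, toQuadraticForm'_albertMatrix,
      ← mem_range_algebraMap_iff_coord_one_eq_zero b hb]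
    rw [hy, hz] at hnorm
    exact hnorm
  have hwi (i : Fin 6) : w i = 0 := congrFun hw i
  have ht0 : t = 0 := hwi 0
  have hs0 : s = 0 := hwi 1
  have hz0 : z = 0 := by
    rw [hz, show b.coord 0 z.re = 0 from hwi 2, show b.coord 1 z.re = 0 from hwi 3,
      show b.coord 0 z.im = 0 from hwi 4, show b.coord 1 z.im = 0 from hwi 5]
    ext <;> simp
  refine hyz hz0 ⟨0, ?_⟩
  rw [hy, ht0, hs0]
  ext <;> simp

theorem exists_isQuadraticOver_of_not_anisotropic (hb : b 0 = 1) {a β : S}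
    (h : ¬ ((albertMatrix (b 1) a β).map (b.coord 1)).toQuadraticForm'.Anisotropic) :
    ∃ y z : QuadraticAlgebra S a 1, IsQuadraticOver R β y z := by
  obtain ⟨w, hw₀, hw⟩ := QuadraticMap.not_anisotropic_iff_exists _ |>.1 h
  rw [toQuadraticForm'_map_linearMap, toQuadraticForm'_albertMatrix,
    ← mem_range_algebraMap_iff_coord_one_eq_zero b hb] at hw
  refine ⟨_, _, ⟨w 0, ?_⟩, hw, fun hz ⟨r, hr⟩ => hw₀ ?_⟩
  · simp [QuadraticAlgebra.trace_def]
  · have hdecomp {r s : R} :=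
      eq_zero_of_algebraMap_add_algebraMap_mul_eq_zero b hb (r := r) (s := s)
    obtain ⟨h₂, h₃⟩ := hdecomp (congrArg QuadraticAlgebra.re hz)
    obtain ⟨h₄, h₅⟩ := hdecomp (congrArg QuadraticAlgebra.im hz)
    rw [IsScalarTower.algebraMap_apply R S (QuadraticAlgebra S a 1)] at hr
    have hre : algebraMap R S r = algebraMap R S (w 1) * b 1 := congrArg QuadraticAlgebra.re hr
    have him : 0 = algebraMap R S (w 0) - 2 * (algebraMap R S (w 1) * b 1) :=
      congrArg QuadraticAlgebra.im hr
    have h₁ : w 1 = 0 := (hdecomp (r := -r) (by rw [map_neg, hre, neg_add_cancel])).2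
    have h₀ : w 0 = 0 := (hdecomp (s := 0) (by simpa [h₁] using him.symm)).1
    ext i
    fin_cases i <;> assumption

theorem exists_isQuadraticOver_iff_not_anisotropic (hb : b 0 = 1) {a β : S} :
    (∃ y z : QuadraticAlgebra S a 1, IsQuadraticOver R β y z) ↔
      ¬ ((albertMatrix (b 1) a β).map (b.coord 1)).toQuadraticForm'.Anisotropic :=
  ⟨fun ⟨_, _, h⟩ => h.not_anisotropic b hb, exists_isQuadraticOver_of_not_anisotropic b hb⟩

end Albert

theorem exists_isQuadraticOver_of_odd_finrank {k K E H : Type*} [Field k] [Field E] [CommRing K]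
    [CommRing H] [Algebra k K] [Algebra k E] [Algebra k H] [Algebra K H] [Algebra E H]
    [IsScalarTower k K H] [IsScalarTower k E H] [Algebra.IsPushout k E K H]
    (hE : Odd (Module.finrank k E)) {b : Module.Basis (Fin 2) k K} (hb : b 0 = 1) {a β : K}
    (h : ∃ y z : QuadraticAlgebra H (algebraMap K H a) 1,
      IsQuadraticOver E (algebraMap K H β) y z) :
    ∃ y z : QuadraticAlgebra K a 1, IsQuadraticOver k β y z := by
  have hbc : IsBaseChange E (IsScalarTower.toAlgHom k K H).toLinearMap := Algebra.IsPushout.out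
  have hbasis (i) : hbc.basis b i = algebraMap K H (b i) := hbc.basis_apply b i
  rw [exists_isQuadraticOver_iff_not_anisotropic b hb]
  rw [exists_isQuadraticOver_iff_not_anisotropic (hbc.basis b) (by rw [hbasis, hb, map_one])] at h
  refine mt (fun hK => ?_) h
  convert anisotropic_map_algebraMap_of_odd_finrank hE hK using 2
  rw [hbasis, ← albertMatrix_map]
  ext i j
  exact hbc.basis_repr_comp_apply b _ _

section SplittingField

theorem exists_isQuadraticOver_of_trace_eq_zero {R S : Type*} [CommRing R] [CommRing S]
    [Nontrivial S] [Algebra R S] (h2 : (2 : R) = 0) {b : Module.Basis (Fin 2) R S} (hb : b 0 = 1)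
    {a β : S} (hβ : IsUnit β) {y z : QuadraticAlgebra S a 1} (hz : IsUnit z) (hy : y.trace = 0)
    (h : y.norm - β * z.norm ∈ (algebraMap R S).range) :
    ∃ y' z' : QuadraticAlgebra S a 1, IsQuadraticOver R β y' z' ∧ y'.trace = 1 := by
  obtain ⟨n, hn⟩ := h
  obtain ⟨β', hβ'⟩ := hβ.exists_right_inv
  obtain ⟨w, hw⟩ := hz.star.exists_right_inv
  let z₀ : QuadraticAlgebra S a 1 := (β' * ((ω * star y).trace - b 1)) • (ω * w)
  have hpolar : (ω * star y).trace - β * (z₀ * star z).trace = b 1 := by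
    have hz₀ : z₀ * star z = (β' * ((ω * star y).trace - b 1)) • ω := by
      rw [smul_mul_assoc, mul_assoc, mul_comm w, hw, mul_one]
    rw [hz₀, map_smul, QuadraticAlgebra.trace_omega, smul_eq_mul]
    linear_combination (b 1 - (ω * star y).trace) * hβ'
  set x := (ω : QuadraticAlgebra S a 1).norm - β * z₀.norm
  have hx := algebraMap_coord_zero_add_algebraMap_coord_one_mul b hb x
  set r := b.coord 0 x
  set s := b.coord 1 x
  have htr : (ω + -algebraMap R S s • y).trace = 1 := by
    rw [map_add, map_smul, hy, smul_zero, QuadraticAlgebra.trace_omega, add_zero]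
  refine ⟨ω + -algebraMap R S s • y, z₀ + -algebraMap R S s • z, ⟨⟨1, by rw [htr, map_one]⟩,
    ⟨r + s ^ 2 * n, ?_⟩, fun _ ⟨t, ht⟩ => one_ne_zero (α := S) ?_⟩, htr⟩
  · rw [norm_add_smul, norm_add_smul, map_add, map_mul, map_pow, hn]
    linear_combination hx + algebraMap R S s * hpolar
  · have h2' : (2 : S) = 0 := by simpa only [map_ofNat, map_zero] using congrArg (algebraMap R S) h2
    rw [← htr, ← ht, IsScalarTower.algebraMap_apply R S (QuadraticAlgebra S a 1),
      QuadraticAlgebra.trace_algebraMap, h2', zero_mul]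

theorem eq_zero_of_norm_eq_mul_norm {K : Type*} [Field K] {a β : K}
    (hΛ : IsField (QuadraticAlgebra K a 1)) (hβ : ¬ ∃ x : QuadraticAlgebra K a 1, x.norm = β)
    {y z : QuadraticAlgebra K a 1} (h : y.norm = β * z.norm) : y = 0 ∧ z = 0 := by
  let _ := hΛ.toField
  have hz : z = 0 := by
    by_contra hz
    exact hβ <| exists_norm_eq_of_norm_eq_mul_norm
      (QuadraticAlgebra.isUnit_iff_norm_isUnit.1 (IsUnit.mk0 z hz)) h
  refine ⟨?_, hz⟩
  by_contra hy
  refine (QuadraticAlgebra.isUnit_iff_norm_isUnit.1 (IsUnit.mk0 y hy)).ne_zero ?_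
  rw [h, hz, QuadraticAlgebra.norm_zero, mul_zero]

variable {k K : Type*} [Field k] [Field K] [Algebra k K]

theorem exists_isQuadraticOver_two_ne_zero_or_trace_ne_zero [Algebra.IsSeparable k K]
    {b : Module.Basis (Fin 2) k K} (hb : b 0 = 1) {a β : K}
    (hΛ : IsField (QuadraticAlgebra K a 1)) (hβ : β ≠ 0)
    (h : ∃ y z : QuadraticAlgebra K a 1, IsQuadraticOver k β y z) :
    ∃ y z : QuadraticAlgebra K a 1, IsQuadraticOver k β y z ∧ ((2 : k) ≠ 0 ∨ y.trace ≠ 0) := by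
  obtain ⟨y, z, h⟩ := h
  by_cases! h2 : (2 : k) ≠ 0 ∨ y.trace ≠ 0
  · exact ⟨y, z, h, h2⟩
  obtain ⟨h2, hy⟩ := h2
  by_cases hz : z = 0
  · refine (h.notMem_of_eq_zero hz ?_).elim
    have h2' : (2 : K) = 0 := by simpa only [map_ofNat, map_zero] using congrArg (algebraMap k K) h2
    have him : y.im = 0 := by simpa [QuadraticAlgebra.trace_def, h2'] using hy
    obtain ⟨r, hr⟩ := mem_range_algebraMap_of_sq_mem_range h2 (x := y.re) (by
      simpa [hz, him, QuadraticAlgebra.norm_def, sq] using h.norm_mem)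
    refine ⟨r, ?_⟩
    rw [IsScalarTower.algebraMap_apply k K (QuadraticAlgebra K a 1), hr]
    ext
    · rfl
    · exact him.symm
  · obtain ⟨y', z', h', hy'⟩ := exists_isQuadraticOver_of_trace_eq_zero h2 hb (IsUnit.mk0 β hβ)
      (letI := hΛ.toField; IsUnit.mk0 z hz) hy h.norm_mem
    exact ⟨y', z', h', .inr (by rw [hy']; exact one_ne_zero)⟩

open Polynomial in
theorem exists_isSeparable_finrank_eq_two_of_forall_ne_zero.{u} {k : Type u} [Field k] {t n : k}
    (hroot : ∀ r : k, r ^ 2 - t * r + n ≠ 0) (ht : (2 : k) ≠ 0 ∨ t ≠ 0) :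
    ∃ (F : Type u) (_ : Field F) (_ : Algebra k F), Algebra.IsSeparable k F ∧
      Module.finrank k F = 2 ∧ ∃ α : F, α ^ 2 - algebraMap k F t * α + algebraMap k F n = 0 := by
  let f : k[X] := X ^ 2 - C t * X + C n
  have hdeg : f.natDegree = 2 := by simp only [f]; compute_degree!
  have hmonic : f.Monic := by simp only [f]; monicity!
  have hirr : Irreducible f := by
    rw [irreducible_iff_roots_eq_zero_of_degree_le_three hdeg.ge (by lia),
      Multiset.eq_zero_iff_forall_notMem]
    exact fun r hr => hroot r (by simpa [f] using (mem_roots hmonic.ne_zero).1 hr)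
  have : Fact (Irreducible f) := ⟨hirr⟩
  have hsep : f.Separable := by
    rw [separable_iff_derivative_ne_zero hirr]
    intro hder
    replace hder : C 2 * X - C t = 0 := by simpa [f, one_add_one_eq_two] using hder
    have h2 : (2 : k) = 0 := by simpa using congrArg (coeff · 1) hder
    have h0 : t = 0 := by simpa using congrArg (coeff · 0) hder
    exact ht.elim (· h2) (· h0)
  have hα : IsSeparable k (AdjoinRoot.root f) := by
    rw [IsSeparable, AdjoinRoot.minpoly_root hmonic.ne_zero, hmonic.leadingCoeff]
    simpa using hsep
  refine ⟨AdjoinRoot f, inferInstance, inferInstance, ?_, ?_, AdjoinRoot.root f, ?_⟩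
  · rw [← AlgEquiv.Algebra.isSeparable_iff IntermediateField.topEquiv,
      ← IntermediateField.adjoin_root_eq_top f]
    exact (IntermediateField.isSeparable_adjoin_simple_iff_isSeparable _ _).2 hα
  · rw [(AdjoinRoot.powerBasis hmonic.ne_zero).finrank, AdjoinRoot.powerBasis_dim, hdeg]
  · simpa [f] using AdjoinRoot.eval₂_root f

theorem algebraMap_sub_two_mul_ne_zero {k F : Type*} [Field k] [Field F] [Algebra k F] {t n : k}
    (hroot : ∀ r : k, r ^ 2 - t * r + n ≠ 0) (ht : (2 : k) ≠ 0 ∨ t ≠ 0) {α : F}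
    (hα : α ^ 2 - algebraMap k F t * α + algebraMap k F n = 0) :
    algebraMap k F t - 2 * α ≠ 0 := by
  intro h
  by_cases h2 : (2 : k) = 0
  · have h2' : (2 : F) = 0 := by simpa only [map_ofNat, map_zero] using congrArg (algebraMap k F) h2
    exact ht.elim (· h2) (· (by simpa [h2'] using h))
  · have h2' : (2 : F) ≠ 0 := by simpa only [map_ofNat] using (map_ne_zero (algebraMap k F)).2 h2
    obtain rfl : α = algebraMap k F (t / 2) := by
      rw [map_div₀, map_ofNat]
      field_simp
      linear_combination -h
    refine hroot (t / 2) ((algebraMap k F).injective ?_)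
    simpa only [map_add, map_sub, map_mul, map_pow, map_zero] using hα

theorem exists_norm_eq_of_sq_sub_trace_mul_add_norm_eq_zero {T : Type*} [CommRing T] [Algebra K T]
    {a β : K} {y z : QuadraticAlgebra K a 1} (hz : z = 0 ∨ IsUnit z.norm) {α : T}
    (hα : α ^ 2 - algebraMap K T y.trace * α + algebraMap K T (y.norm - β * z.norm) = 0)
    (hunit : IsUnit (algebraMap K T y.trace - 2 * α)) :
    ∃ x : QuadraticAlgebra T (algebraMap K T a) 1, x.norm = algebraMap K T β := by
  let y' : QuadraticAlgebra T (algebraMap K T a) 1 := ⟨algebraMap K T y.re, algebraMap K T y.im⟩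
  let z' : QuadraticAlgebra T (algebraMap K T a) 1 := ⟨algebraMap K T z.re, algebraMap K T z.im⟩
  have hy' : y'.norm = algebraMap K T y.norm := by simp [y', QuadraticAlgebra.norm_def]
  have hz' : z'.norm = algebraMap K T z.norm := by simp [z', QuadraticAlgebra.norm_def]
  have htr : y'.trace = algebraMap K T y.trace := by
    simp [y', QuadraticAlgebra.trace_def, map_ofNat]
  have hv : (y' - algebraMap T _ α).norm = algebraMap K T β * z'.norm := by
    rw [norm_sub_algebraMap, hy', hz', htr]
    rw [map_sub, map_mul] at hα
    linear_combination hα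
  rcases hz with rfl | hz
  · refine exists_norm_eq_of_norm_eq_zero (v := y' - algebraMap T _ α) ?_ ?_ _
    · simpa [hz'] using hv
    · rwa [map_sub, htr, QuadraticAlgebra.trace_algebraMap]
  · exact exists_norm_eq_of_norm_eq_mul_norm (hz' ▸ hz.map (algebraMap K T)) hv

theorem IsQuadraticOver.sq_sub_mul_add_ne_zero {a β : K} (hΛ : IsField (QuadraticAlgebra K a 1))
    (hβ : ¬ ∃ x : QuadraticAlgebra K a 1, x.norm = β) {y z : QuadraticAlgebra K a 1}
    (h : IsQuadraticOver k β y z) {t n : k} (ht : algebraMap k K t = y.trace)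
    (hn : algebraMap k K n = y.norm - β * z.norm) (r : k) : r ^ 2 - t * r + n ≠ 0 := by
  intro hr
  replace hr := congrArg (algebraMap k K) hr
  simp only [map_add, map_sub, map_mul, map_pow, map_zero, ht, hn] at hr
  obtain ⟨hy, hz⟩ := eq_zero_of_norm_eq_mul_norm hΛ hβ
    (y := y - algebraMap K _ (algebraMap k K r)) (z := z)
    (by rw [norm_sub_algebraMap]; linear_combination hr)
  exact h.notMem_of_eq_zero hz ⟨r, by
    rw [IsScalarTower.algebraMap_apply k K (QuadraticAlgebra K a 1), sub_eq_zero.1 hy]⟩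

theorem exists_isSeparable_finrank_eq_two_norm_eq.{u} {k : Type u} {K : Type*} [Field k] [Field K]
    [Algebra k K] [Algebra.IsSeparable k K] {b : Module.Basis (Fin 2) k K} (hb : b 0 = 1)
    {a β : K} (hΛ : IsField (QuadraticAlgebra K a 1)) (hβ₀ : β ≠ 0)
    (hβ : ¬ ∃ x : QuadraticAlgebra K a 1, x.norm = β)
    (h : ∃ y z : QuadraticAlgebra K a 1, IsQuadraticOver k β y z) :
    ∃ (F : Type u) (_ : Field F) (_ : Algebra k F), Algebra.IsSeparable k F ∧
      Module.finrank k F = 2 ∧ ∃ z : QuadraticAlgebra (K ⊗[k] F) (algebraMap K _ a) 1,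
        z.norm = algebraMap K (K ⊗[k] F) β := by
  obtain ⟨y, z, h, hsep⟩ := exists_isQuadraticOver_two_ne_zero_or_trace_ne_zero hb hΛ hβ₀ h
  obtain ⟨t, ht⟩ := h.trace_mem
  obtain ⟨n, hn⟩ := h.norm_mem
  have hroot := h.sq_sub_mul_add_ne_zero hΛ hβ ht hn
  replace hsep : (2 : k) ≠ 0 ∨ t ≠ 0 := hsep.imp_right fun hy h0 => hy (by rw [← ht, h0, map_zero])
  obtain ⟨F, _, _, hF, hF₂, α, hα⟩ := exists_isSeparable_finrank_eq_two_of_forall_ne_zero hroot hsep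
  refine ⟨F, _, _, hF, hF₂, ?_⟩
  let i : F →ₐ[k] K ⊗[k] F := Algebra.TensorProduct.includeRight
  have hi (x : k) : algebraMap K (K ⊗[k] F) (algebraMap k K x) = i (algebraMap k F x) := by
    rw [i.commutes, ← IsScalarTower.algebraMap_apply]
  refine exists_norm_eq_of_sq_sub_trace_mul_add_norm_eq_zero (y := y) (z := z) ?_ (α := i α) ?_ ?_
  · refine or_iff_not_imp_left.2 fun hz => ?_
    let _ := hΛ.toField
    exact QuadraticAlgebra.isUnit_iff_norm_isUnit.1 (IsUnit.mk0 z hz)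
  · simpa only [← ht, ← hn, hi, map_add, map_sub, map_mul, map_pow, map_zero] using congrArg i hα
  · have := (IsUnit.mk0 _ (algebraMap_sub_two_mul_ne_zero hroot hsep hα)).map i
    rwa [map_sub, map_mul, map_ofNat, ← hi, ht] at this

end SplittingField

theorem IsNormFrom.exists_isQuadraticOver {k K L E E' : Type} [Field k] [Field K] [Field L]
    [Field E] [Field E'] [Algebra k K] [Algebra k L] [Algebra K L] [IsScalarTower k K L]
    [Algebra k E] [Algebra E E'] [Algebra k E'] [IsScalarTower k E E']
    (h : (Module.finrank k L).Coprime (Module.finrank k E)) (hE' : Module.finrank E E' = 2)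
    {c : Module.Basis (Fin 2) K L} (hc : c 0 = 1) {a : K} (ha : c 1 * c 1 = a • 1 + (1 : K) • c 1)
    {β : K} (hβ : β ≠ 0) (hnorm : IsNormFrom k K L E' β) :
    letI := Algebra.TensorProduct.rightAlgebra (R := k) (A := K) (B := E)
    ∃ y z : QuadraticAlgebra (K ⊗[k] E) (algebraMap K _ a) 1,
      IsQuadraticOver E (algebraMap K _ β) y z := by
  let _ := Algebra.TensorProduct.rightAlgebra (R := k) (A := K) (B := E)
  obtain ⟨d, hd⟩ := exists_basis_zero_eq_one hE'
  obtain ⟨ν, τ, hντ⟩ := exists_mul_self_eq_smul_one_add_smul d hd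
  obtain ⟨f⟩ := nonempty_tensorProduct_algHom_quadraticAlgebra (k := k) (K := K) (H := K ⊗[k] E)
    (quadraticAlgebraEquivOfBasis d hd hντ)
  have hmap (x : K) : f.toRingHom (algebraMap K _ x) =
      algebraMap (K ⊗[k] E) _ (algebraMap K (K ⊗[k] E) x) :=
    (f.commutes x).trans (IsScalarTower.algebraMap_apply K (K ⊗[k] E) _ x)
  have hf := exists_norm_eq_of_ringHom f.toRingHom ((isNormFrom_iff hc ha hβ).1 hnorm)
  rw [hmap, hmap, map_one] at hf
  exact exists_isQuadraticOver_of_norm_eq (isField_quadraticAlgebra_tensorProduct hc ha h)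
    ((map_ne_zero (algebraMap K (K ⊗[k] E))).2 hβ) hf

theorem exists_isSeparable_finrank_eq_two_isNormFrom {k K L : Type} [Field k] [Field K] [Field L]
    [Algebra k K] [Algebra k L] [Algebra K L] [IsScalarTower k K L] [Algebra.IsSeparable k K]
    {b : Module.Basis (Fin 2) k K} (hb : b 0 = 1) {c : Module.Basis (Fin 2) K L} (hc : c 0 = 1)
    {a : K} (ha : c 1 * c 1 = a • 1 + (1 : K) • c 1) {β : K} (hβ : β ≠ 0)
    (h : ∃ y z : QuadraticAlgebra K a 1, IsQuadraticOver k β y z) :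
    ∃ (F : Type) (_ : Field F) (_ : Algebra k F),
      Algebra.IsSeparable k F ∧ Module.finrank k F = 2 ∧ IsNormFrom k K L F β := by
  simp only [isNormFrom_iff hc ha hβ]
  by_cases hnorm : ∃ x : QuadraticAlgebra K a 1, x.norm = β
  · have hK : Module.finrank k K = 2 := by simp [Module.finrank_eq_card_basis b]
    have := exists_norm_eq_of_ringHom (algebraMap K (K ⊗[k] K)) hnorm
    rw [map_one] at this
    exact ⟨K, _, _, inferInstance, hK, this⟩
  · exact exists_isSeparable_finrank_eq_two_norm_eq hb
      ((quadraticAlgebraEquivOfBasis c hc ha).toMulEquiv.isField (Field.toIsField L)) hβ hnorm h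

theorem stmt1_general (k K L : Type) [Field k] [Field K] [Field L]
    [Algebra k K] [Algebra k L] [Algebra K L] [IsScalarTower k K L]
    [Algebra.IsSeparable k L]
    (hKk : Module.finrank k K = 2) (hLK : Module.finrank K L = 2)
    (β : Kˣ) (E E' : Type) [Field E] [Field E']
    [Algebra k E] [Algebra E E'] [Algebra k E'] [IsScalarTower k E E']
    (hE : Odd (Module.finrank k E)) (hE' : Module.finrank E E' = 2)
    (hnorm : IsNormFrom k K L E' (β : K)) :
    ∃ (F : Type) (_ : Field F) (_ : Algebra k F),
      Algebra.IsSeparable k F ∧ Module.finrank k F = 2 ∧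
      IsNormFrom k K L F (β : K) := by
  have : FiniteDimensional k K := .of_finrank_pos (by omega)
  have : Algebra.IsSeparable k K := Algebra.isSeparable_tower_bot_of_isSeparable k K L
  have : Algebra.IsSeparable K L := Algebra.isSeparable_tower_top_of_isSeparable k K L
  have hcoprime : (Module.finrank k L).Coprime (Module.finrank k E) := by
    rw [← Module.finrank_mul_finrank k K L, hKk, hLK]
    exact hE.coprime_two_left.mul_left hE.coprime_two_left
  obtain ⟨b, hb⟩ := exists_basis_zero_eq_one hKk
  obtain ⟨c, a, hc, ha⟩ := exists_basis_mul_self_eq_smul_one_add hLK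
  let _ := Algebra.TensorProduct.rightAlgebra (R := k) (A := K) (B := E)
  have hquad := hnorm.exists_isQuadraticOver hcoprime hE' hc ha β.ne_zero
  exact exists_isSeparable_finrank_eq_two_isNormFrom hb hc ha β.ne_zero
    (exists_isQuadraticOver_of_odd_finrank hE hb hquad)

theorem stmt1 (k K L : Type) [Field k] [Field K] [Field L]
    [Algebra k K] [Algebra k L] [Algebra K L] [IsScalarTower k K L]
    [Algebra.IsSeparable k L]
    (hKk : Module.finrank k K = 2) (hLK : Module.finrank K L = 2)
    (huniq : ∀ M : IntermediateField k L,
      M = ⊥ ∨ M = ⊤ ∨ M = (IsScalarTower.toAlgHom k K L).fieldRange)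
    (β : Kˣ) (hβ : ¬ ∃ x : Lˣ, Algebra.norm K (x : L) = (β : K))
    (E E' : Type) [Field E] [Field E']
    [Algebra k E] [Algebra E E'] [Algebra k E'] [IsScalarTower k E E']
    [FiniteDimensional k E'] [Algebra.IsSeparable k E']
    (hE : Odd (Module.finrank k E)) (hE' : Module.finrank E E' = 2)
    (hnorm : IsNormFrom k K L E' (β : K)) :
    ∃ (F : Type) (_ : Field F) (_ : Algebra k F),
      Algebra.IsSeparable k F ∧ Module.finrank k F = 2 ∧
      IsNormFrom k K L F (β : K) :=
  stmt1_general k K L hKk hLK β E E' hE hE' hnorm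
end

section
/- Let k be a field with separable closure k^s and let L₁, L₂ be intermediate fields of k^s/k with [L₁:k] = [L₂:k] = 2. Then for all β₁, β₂ ∈ kˣ there exists a finite separable field extension F/k such that (i) for i = 1, 2, βᵢ ⊗ 1 is a norm from (Lᵢ ⊗_k F)ˣ to Fˣ, and (ii) for every finite separable field extension F'/k for which both β₁ ⊗ 1 is a norm from (L₁ ⊗_k F')ˣ and β₂ ⊗ 1 is a norm from (L₂ ⊗_k F')ˣ, the degree [F:k] divides [F':k]. -/
open TensorProduct

/-- `β ∈ k` is a norm from `(L ⊗[k] F)ˣ` to `Fˣ`, where `L ⊗[k] F` is regarded as an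
`F`-algebra via the right tensor factor. -/
def IsBaseNorm (k L F : Type) [Field k] [Field L] [Field F]
    [Algebra k L] [Algebra k F] (β : k) : Prop :=
  letI : Algebra F (L ⊗[k] F) :=
    (Algebra.TensorProduct.includeRight (R := k) (A := L) (B := F)).toRingHom.toAlgebra
  ∃ x : (L ⊗[k] F)ˣ, Algebra.norm F (x : L ⊗[k] F) = algebraMap k F β

/-!
A separable quadratic extension `L` of `k` is `k[ω]` with `ω² = p + qω`, and `β` is a norm from
`L ⊗ F` exactly when `F` splits the quaternion algebra `Q = (p, q, β)`. So `F` has to split two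
quaternion algebras `Q₁` and `Q₂`, and a field of degree `1`, `2` or `4` will do, according to
whether both are split over `k`, both are split by a common separable extension of degree at most
`2`, or neither holds (then adjoin a root for each `Lᵢ`).

For minimality, a field `F'` splitting `Q` makes `Q` act on the `k`-space `F'²`, so that
`4 ∣ 2 * [F' : k]` when `Q` is a division algebra. If `F'` splits `Q₁` and `Q₂`, both act on
`F'² ⊗ F'²`, and the actions commute. When there is no common separable splitting field of degree at
most `2`, Albert's argument shows that `Q₁ ⊗ Q₂` is a division algebra: it is
`D ⊕ D j` for the division algebra `D = L₁ ⊗ Q₂`, where `j² = β₁` and `j` acts on `D` through the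
conjugation `σ` of `L₁`, and an equation `σ(x) * x = β₁` in `D` would produce a quadratic
subalgebra common to `Q₁` and `Q₂`. Hence `16 ∣ 4 * [F' : k]`.
-/

open scoped Quaternion QuadraticAlgebra

universe u v

/-! ### Norms from quadratic algebras -/

/-- The ring homomorphism between quadratic algebras that applies `f` to both coefficients. -/
@[simps]
def mapQuadraticAlgebra {R S : Type*} [CommRing R] [CommRing S] (f : R →+* S) {a b : R} {a' b' : S}
    (ha : f a = a') (hb : f b = b') : QuadraticAlgebra R a b →+* QuadraticAlgebra S a' b' where
  toFun z := ⟨f z.re, f z.im⟩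
  map_one' := by ext <;> simp
  map_zero' := by ext <;> simp
  map_add' z w := by ext <;> simp
  map_mul' z w := by subst ha hb; ext <;> simp

theorem norm_mapQuadraticAlgebra {R S : Type*} [CommRing R] [CommRing S] (f : R →+* S) {a b : R}
    {a' b' : S} (ha : f a = a') (hb : f b = b') (z : QuadraticAlgebra R a b) :
    (mapQuadraticAlgebra f ha hb z).norm = f z.norm := by
  simp [QuadraticAlgebra.norm_def, ha, hb]

/-- The relation "`β` is a norm from `k[ω]`, `ω² = p + qω`, after extending scalars to `R`". The
extension of scalars is encoded as a quadratic algebra over `R`. -/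
def IsQuadraticNorm {k : Type*} (R : Type*) [CommRing k] [CommRing R] [Algebra k R]
    (p q β : k) : Prop :=
  ∃ z : QuadraticAlgebra R (algebraMap k R p) (algebraMap k R q), z.norm = algebraMap k R β

theorem isQuadraticNorm_algebraMap_iff {k E R : Type*} [CommRing k] [CommRing E] [CommRing R]
    [Algebra k E] [Algebra k R] [Algebra E R] [IsScalarTower k E R] {p q β : k} :
    IsQuadraticNorm R (algebraMap k E p) (algebraMap k E q) (algebraMap k E β) ↔
      IsQuadraticNorm R p q β := by
  unfold IsQuadraticNorm
  rw [← IsScalarTower.algebraMap_apply k E R, ← IsScalarTower.algebraMap_apply k E R,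
    ← IsScalarTower.algebraMap_apply k E R]

theorem IsQuadraticNorm.map {k R S : Type*} [CommRing k] [CommRing R] [CommRing S] [Algebra k R]
    [Algebra k S] {p q β : k} (f : R →ₐ[k] S) :
    IsQuadraticNorm R p q β → IsQuadraticNorm S p q β := by
  rintro ⟨z, hz⟩
  have hf (r : k) : (f : R →+* S) (algebraMap k R r) = algebraMap k S r := f.commutes r
  exact ⟨mapQuadraticAlgebra f (hf p) (hf q) z, by rw [norm_mapQuadraticAlgebra, hz, hf]⟩

section Field

variable {K : Type*} [Field K] {a b c θ : K}

theorem exists_root_of_norm_eq_zero {z : QuadraticAlgebra K a b} (hz : z ≠ 0) (h : z.norm = 0) :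
    ∃ θ : K, θ ^ 2 = a + b * θ := by
  by_contra! hroot
  have : Fact (∀ θ : K, θ ^ 2 ≠ a + b * θ) := ⟨hroot⟩
  exact hz (QuadraticAlgebra.norm_eq_zero_iff_eq_zero.mp h)

theorem exists_norm_eq_of_root (hd : b ^ 2 + 4 * a ≠ 0) (hθ : θ ^ 2 = a + b * θ) (c : K) :
    ∃ z : QuadraticAlgebra K a b, z.norm = c := by
  have hsimple : 2 * θ - b ≠ 0 := fun h => hd (by linear_combination (2 * θ - b) * h - 4 * hθ)
  -- The norm of `x + yω` is `(x + yθ) * (x + y(b - θ))`; make the factors equal to `c` and `1`.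
  obtain ⟨y, hy⟩ : ∃ y, y * (2 * θ - b) = c - 1 :=
    ⟨(c - 1) / (2 * θ - b), div_mul_cancel₀ _ hsimple⟩
  refine ⟨⟨c - y * θ, y⟩, ?_⟩
  rw [QuadraticAlgebra.norm_def]
  linear_combination y ^ 2 * hθ - c * hy

theorem exists_norm_eq_of_norm_eq_mul_norm_s4 (hd : b ^ 2 + 4 * a ≠ 0) {z w : QuadraticAlgebra K a b}
    (hzw : z ≠ 0 ∨ w ≠ 0) (h : z.norm = c * w.norm) :
    ∃ v : QuadraticAlgebra K a b, v.norm = c := by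
  by_cases hw : w.norm = 0
  · rw [hw, mul_zero] at h
    obtain ⟨θ, hθ⟩ : ∃ θ : K, θ ^ 2 = a + b * θ :=
      hzw.elim (exists_root_of_norm_eq_zero · h) (exists_root_of_norm_eq_zero · hw)
    exact exists_norm_eq_of_root hd hθ c
  · obtain ⟨u, rfl⟩ := QuadraticAlgebra.isUnit_iff_norm_isUnit.mpr (isUnit_iff_ne_zero.mpr hw)
    refine ⟨z * ↑u⁻¹, ?_⟩
    rw [map_mul, h, mul_assoc, ← map_mul, u.mul_inv, map_one, mul_one]

end Field

theorem algebraMap_disc_ne_zero {k F : Type*} [Field k] [CommRing F] [Nontrivial F] [Algebra k F]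
    {p q : k} (hd : q ^ 2 + 4 * p ≠ 0) : algebraMap k F q ^ 2 + 4 * algebraMap k F p ≠ 0 := by
  have : algebraMap k F (q ^ 2 + 4 * p) ≠ 0 := (map_ne_zero _).mpr hd
  simpa only [map_add, map_mul, map_pow, map_ofNat] using this

theorem IsQuadraticNorm.of_root {k F : Type*} [Field k] [Field F] [Algebra k F] {p q β : k}
    (hd : q ^ 2 + 4 * p ≠ 0) {θ : F} (hθ : θ ^ 2 = algebraMap k F p + algebraMap k F q * θ) :
    IsQuadraticNorm F p q β :=
  exists_norm_eq_of_root (algebraMap_disc_ne_zero hd) hθ _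

/-! ### Quaternion algebras -/

section Ring

variable {R S : Type*} [CommRing R] [CommRing S] {a b c : R}

/-- The ring homomorphism between quaternion algebras that applies `f` to all coefficients. -/
@[simps]
def mapQuaternion (f : R →+* S) {a' b' c' : S} (ha : f a = a') (hb : f b = b') (hc : f c = c') :
    ℍ[R,a,b,c] →+* ℍ[S,a',b',c'] where
  toFun x := ⟨f x.re, f x.imI, f x.imJ, f x.imK⟩
  map_one' := by ext <;> simp
  map_zero' := by ext <;> simp
  map_add' x y := by ext <;> simp
  map_mul' x y := by subst ha hb hc; ext <;> simp

/-- The reduced trace `x + star x` of a quaternion, as a scalar. -/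
def reducedTrace (x : ℍ[R,a,b,c]) : R :=
  2 * x.re + b * x.imI

/-- The reduced norm `x * star x` of a quaternion, as a scalar. In terms of `ω = i` it is the
two-dimensional Pfister form `N(z) - c * N(w)`, where `x = z + w * j`. -/
def reducedNorm (x : ℍ[R,a,b,c]) : R :=
  (⟨x.re, x.imI⟩ : QuadraticAlgebra R a b).norm -
    c * (⟨x.imJ, x.imK⟩ : QuadraticAlgebra R a b).norm

theorem reducedTrace_def (x : ℍ[R,a,b,c]) : reducedTrace x = 2 * x.re + b * x.imI :=
  rfl

theorem reducedNorm_def (x : ℍ[R,a,b,c]) : reducedNorm x =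
    x.re ^ 2 + b * x.re * x.imI - a * x.imI ^ 2 -
      c * (x.imJ ^ 2 + b * x.imJ * x.imK - a * x.imK ^ 2) := by
  simp only [reducedNorm, QuadraticAlgebra.norm_def]
  ring

theorem mul_star_eq_reducedNorm (x : ℍ[R,a,b,c]) : x * star x = algebraMap R _ (reducedNorm x) := by
  ext <;> simp [QuaternionAlgebra.algebraMap_eq, reducedNorm_def] <;> ring

theorem mul_self_eq_reducedTrace_smul_sub (x : ℍ[R,a,b,c]) :
    x * x = reducedTrace x • x - algebraMap R _ (reducedNorm x) := by
  ext <;> simp [QuaternionAlgebra.algebraMap_eq, reducedNorm_def, reducedTrace_def] <;> ring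

theorem reducedNorm_sub_algebraMap (x : ℍ[R,a,b,c]) (r : R) :
    reducedNorm (x - algebraMap R _ r) = r ^ 2 - reducedTrace x * r + reducedNorm x := by
  simp [QuaternionAlgebra.algebraMap_eq, reducedNorm_def, reducedTrace_def]
  ring

theorem reducedTrace_mapQuaternion (f : R →+* S) {a' b' c' : S} (ha : f a = a') (hb : f b = b')
    (hc : f c = c') (x : ℍ[R,a,b,c]) :
    reducedTrace (mapQuaternion f ha hb hc x) = f (reducedTrace x) := by
  simp [reducedTrace_def, hb, map_ofNat]

theorem reducedNorm_mapQuaternion (f : R →+* S) {a' b' c' : S} (ha : f a = a') (hb : f b = b')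
    (hc : f c = c') (x : ℍ[R,a,b,c]) :
    reducedNorm (mapQuaternion f ha hb hc x) = f (reducedNorm x) := by
  simp [reducedNorm_def, ha, hb, hc]

end Ring

theorem isUnit_of_reducedNorm_ne_zero {K : Type*} [Field K] {a b c : K} {x : ℍ[K,a,b,c]}
    (hx : reducedNorm x ≠ 0) : IsUnit x := by
  have hunit : IsUnit (x * star x) := by
    rw [mul_star_eq_reducedNorm]
    exact (isUnit_iff_ne_zero.mpr hx).map _
  exact ((show Commute x (star x) from (star_comm_self' x).symm).isUnit_mul_iff.mp hunit).1

theorem exists_norm_eq_of_reducedNorm_eq_zero {K : Type*} [Field K] {a b c : K}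
    (hd : b ^ 2 + 4 * a ≠ 0) {x : ℍ[K,a,b,c]} (hx : x ≠ 0) (h : reducedNorm x = 0) :
    ∃ z : QuadraticAlgebra K a b, z.norm = c := by
  refine exists_norm_eq_of_norm_eq_mul_norm_s4 hd (z := ⟨x.re, x.imI⟩) (w := ⟨x.imJ, x.imK⟩) ?_
    (sub_eq_zero.mp h)
  contrapose! hx
  simp only [QuadraticAlgebra.ext_iff] at hx
  exact QuaternionAlgebra.ext hx.1.1 hx.1.2 hx.2.1 hx.2.2

theorem isUnit_or_eq_zero_of_forall_norm_ne {K : Type*} [Field K] {a b c : K}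
    (hd : b ^ 2 + 4 * a ≠ 0) (hc : ∀ z : QuadraticAlgebra K a b, z.norm ≠ c) (x : ℍ[K,a,b,c]) :
    IsUnit x ∨ x = 0 := by
  by_contra! hx
  have h : reducedNorm x = 0 := not_not.mp (mt isUnit_of_reducedNorm_ne_zero hx.1)
  obtain ⟨z, hz⟩ := exists_norm_eq_of_reducedNorm_eq_zero hd hx.2 h
  exact hc z hz

theorem IsQuadraticNorm.of_root_of_quaternion {k F : Type*} [Field k] [Field F] [Algebra k F]
    {p q β : k} (hd : q ^ 2 + 4 * p ≠ 0) {x : ℍ[k,p,q,β]} (hx : x.im ≠ 0) {θ : F}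
    (hθ : θ ^ 2 = algebraMap k F (-reducedNorm x) + algebraMap k F (reducedTrace x) * θ) :
    IsQuadraticNorm F p q β := by
  let y := mapQuaternion (algebraMap k F) rfl rfl rfl x
  refine exists_norm_eq_of_reducedNorm_eq_zero (algebraMap_disc_ne_zero hd)
    (x := y - algebraMap F _ θ) ?_ ?_
  · contrapose! hx
    have him := congrArg QuaternionAlgebra.im hx
    simpa [y, QuaternionAlgebra.ext_iff, QuaternionAlgebra.algebraMap_eq] using him
  · rw [reducedNorm_sub_algebraMap, reducedTrace_mapQuaternion, reducedNorm_mapQuaternion,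
      hθ, map_neg]
    ring

/-! ### Separable quadratic extensions -/

open Polynomial in
theorem separable_quadratic_iff {K : Type*} [Field K] {a b : K} :
    (X ^ 2 - C b * X - C a).Separable ↔ b ^ 2 + 4 * a ≠ 0 := by
  set f : K[X] := X ^ 2 - C b * X - C a with hf
  have hsq : derivative f ^ 2 = C (b ^ 2 + 4 * a) + f * 4 := by
    simp [hf, map_ofNat]
    ring
  rw [Polynomial.Separable, ← IsCoprime.pow_right_iff two_pos, hsq,
    IsCoprime.add_mul_left_right_iff]
  refine ⟨fun hcop hd => ?_, fun hd => ?_⟩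
  · rw [hd, C_0, isCoprime_zero_right] at hcop
    have hdeg : f.natDegree = 2 := by rw [hf]; compute_degree!
    rw [natDegree_eq_zero_of_isUnit hcop] at hdeg
    contradiction
  · exact isCoprime_one_right.of_isCoprime_of_dvd_right (isUnit_C.mpr hd.isUnit).dvd

theorem isSeparable_quadraticAlgebra {k : Type*} [Field k] {p q : k}
    [Fact (∀ r : k, r ^ 2 ≠ p + q * r)] (hd : q ^ 2 + 4 * p ≠ 0) :
    Algebra.IsSeparable k (QuadraticAlgebra k p q) := by
  refine ⟨fun z => ?_⟩
  by_cases hz : z.im = 0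
  · obtain ⟨r, rfl⟩ : ∃ r, algebraMap k _ r = z := ⟨z.re, by ext <;> simp [hz]⟩
    exact isSeparable_algebraMap r
  have hdisc : z.trace ^ 2 + 4 * -z.norm = z.im ^ 2 * (q ^ 2 + 4 * p) := by
    rw [QuadraticAlgebra.trace_def, QuadraticAlgebra.norm_def]
    ring
  have hsep := separable_quadratic_iff.mpr (hdisc ▸ mul_ne_zero (pow_ne_zero 2 hz) hd)
  refine hsep.of_dvd (minpoly.dvd _ _ ?_)
  simpa [Algebra.smul_def] using QuadraticAlgebra.sq_sub_trace_smul_add_norm_eq_zero z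

theorem exists_isSeparable_root {k : Type u} [Field k] {p q : k} (hd : q ^ 2 + 4 * p ≠ 0) :
    ∃ (K : Type u) (_ : Field K) (_ : Algebra k K), Algebra.IsSeparable k K ∧
      Module.Finite k K ∧ Module.finrank k K ∣ 2 ∧
      ∃ θ : K, θ ^ 2 = algebraMap k K p + algebraMap k K q * θ := by
  by_cases hroot : ∃ r : k, r ^ 2 = p + q * r
  · exact ⟨k, _, _, inferInstance, inferInstance, by simp, hroot⟩
  · push Not at hroot
    have : Fact (∀ r : k, r ^ 2 ≠ p + q * r) := ⟨hroot⟩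
    exact ⟨QuadraticAlgebra k p q, _, _, isSeparable_quadraticAlgebra hd, inferInstance,
      (QuadraticAlgebra.finrank_eq_two p q).dvd, ω,
      (pow_two _).trans QuadraticAlgebra.omega_mul_omega_eq_algebraMap⟩

theorem lift_quadraticAlgebra_injective {k A : Type*} [Field k] [Ring A] [Nontrivial A]
    [Algebra k A] {p q : k} {u : {u : A // u * u = p • 1 + q • u}}
    (hu : u.1 ∉ (algebraMap k A).range) : Function.Injective (QuadraticAlgebra.lift u) := by
  refine (injective_iff_map_eq_zero _).mpr fun z hz => ?_
  rw [QuadraticAlgebra.lift_apply_apply] at hz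
  have him : z.im = 0 := by
    by_contra him
    refine hu ⟨-(z.im⁻¹ * z.re), ?_⟩
    rw [Algebra.algebraMap_eq_smul_one, neg_smul, mul_smul, eq_neg_of_add_eq_zero_left hz,
      smul_neg, neg_neg, inv_smul_smul₀ him]
  have hre : z.re = 0 := by simpa [him] using hz
  exact QuadraticAlgebra.ext hre him

theorem minpoly_eq_quadratic {k L : Type*} [Field k] [Field L] [Algebra k L]
    (h : Module.finrank k L = 2) {θ : L} (hθ : θ ∉ (algebraMap k L).range) :
    minpoly k θ = .X ^ 2 - .C (-(minpoly k θ).coeff 1) * .X - .C (-(minpoly k θ).coeff 0) := by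
  have : FiniteDimensional k L := .of_finrank_pos (by omega)
  have hint : IsIntegral k θ := .of_finite k θ
  have hdeg : (minpoly k θ).natDegree = 2 :=
    ((Nat.dvd_prime Nat.prime_two).mp (h ▸ minpoly.degree_dvd hint)).resolve_left
      (mt minpoly.natDegree_eq_one_iff.mp hθ)
  have hlead : (minpoly k θ).coeff 2 = 1 := hdeg ▸ (minpoly.monic hint).coeff_natDegree
  conv_lhs =>
    rw [Polynomial.eq_quadratic_of_degree_le_two (Polynomial.natDegree_le_iff_degree_le.mp hdeg.le)]
  simp [hlead]

theorem exists_algEquiv_quadraticAlgebra {k L : Type*} [Field k] [Field L] [Algebra k L]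
    [Algebra.IsSeparable k L] (h : Module.finrank k L = 2) :
    ∃ p q : k, q ^ 2 + 4 * p ≠ 0 ∧ Nonempty (L ≃ₐ[k] QuadraticAlgebra k p q) := by
  have : FiniteDimensional k L := .of_finrank_pos (by omega)
  obtain ⟨θ, hθ⟩ : ∃ θ : L, θ ∉ (algebraMap k L).range := by
    by_contra! hall
    have := Subalgebra.bot_eq_top_iff_finrank_eq_one.mp (eq_top_iff.mpr fun x _ => hall x)
    omega
  have hmin := minpoly_eq_quadratic h hθ
  set p := -(minpoly k θ).coeff 0
  set q := -(minpoly k θ).coeff 1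
  have hroot : θ * θ = p • 1 + q • θ := by
    have hzero := minpoly.aeval k θ
    simp only [hmin, map_sub, map_mul, map_pow, Polynomial.aeval_X, Polynomial.aeval_C] at hzero
    rw [Algebra.smul_def, Algebra.smul_def]
    linear_combination hzero
  let f : QuadraticAlgebra k p q →ₐ[k] L := QuadraticAlgebra.lift ⟨θ, hroot⟩
  have hf : Function.Injective f := lift_quadraticAlgebra_injective hθ
  have hbij : Function.Bijective f :=
    ⟨hf, (LinearMap.injective_iff_surjective_of_finrank_eq_finrank (f := f.toLinearMap)
      (by rw [h, QuadraticAlgebra.finrank_eq_two])).mp hf⟩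
  refine ⟨p, q, separable_quadratic_iff.mp ?_, ⟨(AlgEquiv.ofBijective f hbij).symm⟩⟩
  exact hmin ▸ Algebra.IsSeparable.isSeparable k θ

/-! ### Common quadratic splitting fields -/

section Commute

variable {K : Type*} [Field K] {a b c : K}

theorem exists_eq_smul_one_add_smul_of_commute (hd : b ^ 2 + 4 * a ≠ 0) (hc : c ≠ 0)
    {x y : ℍ[K,a,b,c]} (hx : x.im ≠ 0) (hxy : x * y = y * x) :
    ∃ r s : K, y = r • 1 + s • x := by
  have h0 := congrArg QuaternionAlgebra.re hxy
  have hI := congrArg QuaternionAlgebra.imI hxy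
  have hJ := congrArg QuaternionAlgebra.imJ hxy
  have hK := congrArg QuaternionAlgebra.imK hxy
  simp only [QuaternionAlgebra.re_mul, QuaternionAlgebra.imI_mul, QuaternionAlgebra.imJ_mul,
    QuaternionAlgebra.imK_mul] at h0 hI hJ hK
  have hIJ : x.imI * y.imJ = x.imJ * y.imI :=
    mul_left_cancel₀ hd (by linear_combination (-b) * hJ + 2 * a * hK)
  have hIK : x.imI * y.imK = x.imK * y.imI :=
    mul_left_cancel₀ hd (by linear_combination 2 * hJ + b * hK)
  have hJK : x.imJ * y.imK = x.imK * y.imJ :=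
    mul_left_cancel₀ (mul_ne_zero hc hd) (by linear_combination b * h0 - 2 * a * hI)
  have hdep : ¬ LinearIndependent K ![![x.imI, x.imJ, x.imK], ![y.imI, y.imJ, y.imK]] := by
    rw [← crossProduct_ne_zero_iff_linearIndependent, not_not, cross_apply]
    simp [hIJ, hIK, hJK]
  rw [LinearIndependent.pair_iff' (by simpa [QuaternionAlgebra.ext_iff] using hx)] at hdep
  push Not at hdep
  obtain ⟨s, hs⟩ := hdep
  simp only [Matrix.smul_cons, smul_eq_mul, Matrix.smul_empty, Matrix.vecCons_inj, and_true] at hs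
  exact ⟨y.re - s * x.re, s, by ext <;> simp [hs]⟩

theorem exists_common_generator_of_commute (hd : b ^ 2 + 4 * a ≠ 0) (hc : c ≠ 0)
    {x y : ℍ[K,a,b,c]} (hxy : x * y = y * x) :
    ∃ g : ℍ[K,a,b,c], g.im ≠ 0 ∧ (∃ r s : K, x = r • 1 + s • g) ∧ ∃ r s : K, y = r • 1 + s • g := by
  by_cases hx : x.im = 0
  swap
  · exact ⟨x, hx, ⟨0, 1, by simp⟩, exists_eq_smul_one_add_smul_of_commute hd hc hx hxy⟩
  by_cases hy : y.im = 0
  swap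
  · exact ⟨y, hy, exists_eq_smul_one_add_smul_of_commute hd hc hy hxy.symm, ⟨0, 1, by simp⟩⟩
  have hscalar {z : ℍ[K,a,b,c]} (hz : z.im = 0) (g) : ∃ r s : K, z = r • 1 + s • g :=
    ⟨z.re, 0, by simpa [QuaternionAlgebra.ext_iff] using hz⟩
  exact ⟨⟨0, 1, 0, 0⟩, by simp [QuaternionAlgebra.ext_iff], hscalar hx _, hscalar hy _⟩

theorem exists_isQuadraticNorm_of_commute (hd : b ^ 2 + 4 * a ≠ 0) (hc : c ≠ 0)
    {x y : ℍ[K,a,b,c]} (hxy : x * y = y * x) {p q β : K}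
    (h : x * x + q • (x * y) - p • (y * y) = algebraMap K _ β) :
    ∃ g : ℍ[K,a,b,c], g.im ≠ 0 ∧
      IsQuadraticNorm (QuadraticAlgebra K (-reducedNorm g) (reducedTrace g)) p q β := by
  obtain ⟨g, hg, ⟨r, s, rfl⟩, ⟨r', s', rfl⟩⟩ := exists_common_generator_of_commute hd hc hxy
  refine ⟨g, hg, ⟨⟨r, s⟩, ⟨r', s'⟩⟩, ?_⟩
  have hgg : g * g = (-reducedNorm g) • 1 + reducedTrace g • g := by
    rw [mul_self_eq_reducedTrace_smul_sub, Algebra.algebraMap_eq_smul_one]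
    module
  have hrange : g ∉ (algebraMap K ℍ[K,a,b,c]).range := by
    rintro ⟨r, rfl⟩
    exact hg (by simp [QuaternionAlgebra.algebraMap_eq, QuaternionAlgebra.ext_iff])
  apply lift_quadraticAlgebra_injective (u := ⟨g, hgg⟩) hrange
  simp only [QuadraticAlgebra.norm_def, map_sub, map_add, map_mul, AlgHom.commutes]
  simpa only [QuadraticAlgebra.lift_apply_apply, ← Algebra.smul_def, smul_mul_assoc] using h

end Commute

theorem norm_quadraticAlgebra_quadraticAlgebra_s4 {R : Type*} [CommRing R] {p q n t : R}
    (z₀ z₁ : QuadraticAlgebra R p q) :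
    (⟨⟨z₀.re, z₁.re⟩, ⟨z₀.im, z₁.im⟩⟩ : QuadraticAlgebra (QuadraticAlgebra R n t)
      (algebraMap R _ p) (algebraMap R _ q)).norm =
      ⟨z₀.norm + n * z₁.norm, (z₀ * star z₁).trace + t * z₁.norm⟩ := by
  ext <;> simp [QuadraticAlgebra.norm_def, QuadraticAlgebra.trace_def] <;> ring

/-- The second alternative says that the quadratic algebra `k[ω]`, `ω² = n + tω`, embeds into the
quaternion algebra. -/
theorem IsQuadraticNorm.exists_reducedTrace_reducedNorm_eq {k : Type*} [Field k] {p q β n t : k}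
    (h : IsQuadraticNorm (QuadraticAlgebra k n t) p q β) :
    IsQuadraticNorm k p q β ∨
      ∃ x : ℍ[k,p,q,β], x.im ≠ 0 ∧ reducedTrace x = t ∧ reducedNorm x = -n := by
  obtain ⟨z, hz⟩ := h
  let z₀ : QuadraticAlgebra k p q := ⟨z.re.re, z.im.re⟩
  let z₁ : QuadraticAlgebra k p q := ⟨z.re.im, z.im.im⟩
  have hz' := (norm_quadraticAlgebra_quadraticAlgebra_s4 z₀ z₁).symm.trans hz
  have hre : z₀.norm + n * z₁.norm = β := congrArg QuadraticAlgebra.re hz'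
  have him : (z₀ * star z₁).trace + t * z₁.norm = 0 := congrArg QuadraticAlgebra.im hz'
  by_cases hz₁ : z₁.norm = 0
  · exact .inl ⟨z₀, by simpa [hz₁] using hre⟩
  let w := star z₁
  have hw : w.norm = z₁.norm := QuadraticAlgebra.norm_star z₁
  have hw₀ : w ≠ 0 := by
    rintro h
    rw [← hw, h, QuadraticAlgebra.norm_zero] at hz₁
    exact hz₁ rfl
  -- `x = (j - z₀) / z₁`, written with left coefficients in `k[i]`.
  refine .inr ⟨z₁.norm⁻¹ • ⟨-(z₀ * w).re, -(z₀ * w).im, w.re, w.im⟩, ?_, ?_, ?_⟩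
  · contrapose! hw₀
    have hw₀ := congrArg (z₁.norm • ·) hw₀
    simp only [QuaternionAlgebra.im_smul, smul_inv_smul₀ hz₁, smul_zero] at hw₀
    exact QuadraticAlgebra.ext (congrArg QuaternionAlgebra.imJ hw₀)
      (congrArg QuaternionAlgebra.imK hw₀)
  · have htr : (z₀ * w).trace = -(t * z₁.norm) := eq_neg_of_add_eq_zero_left him
    rw [QuadraticAlgebra.trace_def] at htr
    rw [reducedTrace_def, QuaternionAlgebra.re_smul, QuaternionAlgebra.imI_smul, smul_eq_mul,
      smul_eq_mul]
    field_simp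
    linear_combination -htr
  · have hnorm : (-(z₀ * w)).norm - β * w.norm = -n * z₁.norm ^ 2 := by
      rw [QuadraticAlgebra.norm_neg, map_mul, hw]
      linear_combination z₁.norm * hre
    rw [QuadraticAlgebra.norm_def, QuadraticAlgebra.norm_def] at hnorm
    simp only [QuadraticAlgebra.re_neg, QuadraticAlgebra.im_neg] at hnorm
    simp only [reducedNorm_def, QuaternionAlgebra.re_smul, QuaternionAlgebra.imI_smul,
      QuaternionAlgebra.imJ_smul, QuaternionAlgebra.imK_smul, smul_eq_mul]
    field_simp
    linear_combination hnorm

section Linked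

variable {k : Type u} [Field k] {p₁ q₁ β₁ p₂ q₂ β₂ : k}

/-- The quaternion algebras `(p₁, q₁, β₁)` and `(p₂, q₂, β₂)` are split by a common separable
extension of degree dividing `2`. -/
def SeparablyLinked (p₁ q₁ β₁ p₂ q₂ β₂ : k) : Prop :=
  ∃ (K : Type u) (_ : Field K) (_ : Algebra k K), Algebra.IsSeparable k K ∧ Module.Finite k K ∧
    Module.finrank k K ∣ 2 ∧ IsQuadraticNorm K p₁ q₁ β₁ ∧ IsQuadraticNorm K p₂ q₂ β₂

theorem SeparablyLinked.of_forall_root {n t : k} (hd : t ^ 2 + 4 * n ≠ 0)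
    (h : ∀ (K : Type u) [Field K] [Algebra k K] (θ : K),
      θ ^ 2 = algebraMap k K n + algebraMap k K t * θ →
        IsQuadraticNorm K p₁ q₁ β₁ ∧ IsQuadraticNorm K p₂ q₂ β₂) :
    SeparablyLinked p₁ q₁ β₁ p₂ q₂ β₂ := by
  obtain ⟨K, _, _, hsep, hfin, hdvd, θ, hθ⟩ := exists_isSeparable_root hd
  exact ⟨K, _, _, hsep, hfin, hdvd, h K θ hθ⟩

theorem SeparablyLinked.of_isQuadraticNorm_left (hd₂ : q₂ ^ 2 + 4 * p₂ ≠ 0)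
    (h : IsQuadraticNorm k p₁ q₁ β₁) : SeparablyLinked p₁ q₁ β₁ p₂ q₂ β₂ :=
  .of_forall_root hd₂ fun K _ _ _ hθ => ⟨h.map (Algebra.ofId k K), .of_root hd₂ hθ⟩

theorem SeparablyLinked.of_disc_ne_zero (hd₁ : q₁ ^ 2 + 4 * p₁ ≠ 0) (hd₂ : q₂ ^ 2 + 4 * p₂ ≠ 0)
    {x₁ : ℍ[k,p₁,q₁,β₁]} {x₂ : ℍ[k,p₂,q₂,β₂]} (hx₁ : x₁.im ≠ 0) (hx₂ : x₂.im ≠ 0)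
    (htr : reducedTrace x₁ = reducedTrace x₂) (hn : reducedNorm x₁ = reducedNorm x₂)
    (hd : reducedTrace x₂ ^ 2 + 4 * -reducedNorm x₂ ≠ 0) :
    SeparablyLinked p₁ q₁ β₁ p₂ q₂ β₂ :=
  .of_forall_root hd fun K _ _ θ hθ =>
    ⟨.of_root_of_quaternion hd₁ hx₁ (by rwa [htr, hn]), .of_root_of_quaternion hd₂ hx₂ hθ⟩

section CharTwo

variable [CharP k 2]

theorem im_ne_zero_of_reducedTrace_ne_zero {a b c : k} {x : ℍ[k,a,b,c]}
    (hx : reducedTrace x ≠ 0) : x.im ≠ 0 := by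
  contrapose! hx
  simp only [QuaternionAlgebra.ext_iff] at hx
  simp [reducedTrace_def, CharTwo.two_eq_zero, show x.imI = 0 from hx.2.1]

theorem exists_reducedTrace_add_smul_eq_one {a b c : k} (hd : b ^ 2 + 4 * a ≠ 0) (hc : c ≠ 0)
    {x : ℍ[k,a,b,c]} (hx : x.im ≠ 0) (htr : reducedTrace x = 0) (v : k) :
    ∃ e : ℍ[k,a,b,c], ∀ m : k, reducedTrace (e + m • x) = 1 ∧
      reducedNorm (e + m • x) = reducedNorm e + m * v + m ^ 2 * reducedNorm x := by
  have htwo : (2 : k) = 0 := CharTwo.two_eq_zero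
  have hb : b ≠ 0 := by
    rintro rfl
    exact hd (by linear_combination 2 * a * htwo)
  have hI : x.imI = 0 := by
    simpa [reducedTrace_def, htwo, hb] using htr
  obtain ⟨eJ, eK, he⟩ : ∃ eJ eK, c * b * (eJ * x.imK + eK * x.imJ) = x.re - v := by
    by_cases hJ : x.imJ = 0
    · have hK : x.imK ≠ 0 := fun hK => hx (by simp [QuaternionAlgebra.ext_iff, hI, hJ, hK])
      exact ⟨(x.re - v) / (c * b * x.imK), 0, by field_simp; ring⟩
    · exact ⟨0, (x.re - v) / (c * b * x.imJ), by field_simp; ring⟩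
  refine ⟨⟨0, b⁻¹, eJ, eK⟩, fun m => ⟨?_, ?_⟩⟩
  · simp [reducedTrace_def, hI, htwo, hb]
  · simp only [reducedNorm_def, QuaternionAlgebra.re_add, QuaternionAlgebra.imI_add,
      QuaternionAlgebra.imJ_add, QuaternionAlgebra.imK_add, QuaternionAlgebra.re_smul,
      QuaternionAlgebra.imI_smul, QuaternionAlgebra.imJ_smul, QuaternionAlgebra.imK_smul, hI,
      smul_eq_mul]
    linear_combination m * x.re * mul_inv_cancel₀ hb - m * he -
      m * c * (eJ * x.imJ - a * eK * x.imK) * htwo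

/-- In characteristic `2` an inseparable common quadratic subfield can be traded for a separable
one: translate elements of reduced trace `1` along the inseparable generators until their reduced
norms agree. -/
theorem SeparablyLinked.of_reducedTrace_eq_zero (hd₁ : q₁ ^ 2 + 4 * p₁ ≠ 0)
    (hd₂ : q₂ ^ 2 + 4 * p₂ ≠ 0) (hβ₁ : β₁ ≠ 0) (hβ₂ : β₂ ≠ 0)
    {x₁ : ℍ[k,p₁,q₁,β₁]} {x₂ : ℍ[k,p₂,q₂,β₂]} (hx₁ : x₁.im ≠ 0) (hx₂ : x₂.im ≠ 0)
    (htr₁ : reducedTrace x₁ = 0) (htr₂ : reducedTrace x₂ = 0)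
    (hn : reducedNorm x₁ = reducedNorm x₂) : SeparablyLinked p₁ q₁ β₁ p₂ q₂ β₂ := by
  obtain ⟨e₁, he₁⟩ := exists_reducedTrace_add_smul_eq_one hd₁ hβ₁ hx₁ htr₁ 1
  obtain ⟨e₂, he₂⟩ := exists_reducedTrace_add_smul_eq_one hd₂ hβ₂ hx₂ htr₂ 0
  set m := reducedNorm e₂ - reducedNorm e₁
  have him₁ := im_ne_zero_of_reducedTrace_ne_zero ((he₁ m).1.trans_ne one_ne_zero)
  have him₂ := im_ne_zero_of_reducedTrace_ne_zero ((he₂ m).1.trans_ne one_ne_zero)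
  refine .of_disc_ne_zero hd₁ hd₂ him₁ him₂ ((he₁ m).1.trans (he₂ m).1.symm) ?_ ?_
  · rw [(he₁ m).2, (he₂ m).2, hn]
    ring
  · intro hzero
    rw [(he₂ m).1] at hzero
    exact one_ne_zero (α := k) (by
      linear_combination hzero + 2 * reducedNorm (e₂ + m • x₂) * CharTwo.two_eq_zero (R := k))

end CharTwo

theorem SeparablyLinked.of_reducedTrace_eq_of_reducedNorm_eq (hd₁ : q₁ ^ 2 + 4 * p₁ ≠ 0)
    (hd₂ : q₂ ^ 2 + 4 * p₂ ≠ 0) (hβ₁ : β₁ ≠ 0) (hβ₂ : β₂ ≠ 0)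
    {x₁ : ℍ[k,p₁,q₁,β₁]} {x₂ : ℍ[k,p₂,q₂,β₂]} (hx₁ : x₁.im ≠ 0) (hx₂ : x₂.im ≠ 0)
    (htr : reducedTrace x₁ = reducedTrace x₂) (hn : reducedNorm x₁ = reducedNorm x₂) :
    SeparablyLinked p₁ q₁ β₁ p₂ q₂ β₂ := by
  by_cases hd : reducedTrace x₂ ^ 2 + 4 * -reducedNorm x₂ = 0
  swap
  · exact .of_disc_ne_zero hd₁ hd₂ hx₁ hx₂ htr hn hd
  by_cases htwo : (2 : k) = 0
  · have : CharP k 2 := CharTwo.of_one_ne_zero_of_two_eq_zero one_ne_zero htwo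
    have htr₂ : reducedTrace x₂ = 0 :=
      pow_eq_zero_iff two_ne_zero |>.mp (by linear_combination hd + 2 * reducedNorm x₂ * htwo)
    exact .of_reducedTrace_eq_zero hd₁ hd₂ hβ₁ hβ₂ hx₁ hx₂ (htr.trans htr₂) htr₂ hn
  · have hθ : (reducedTrace x₂ / 2) ^ 2 =
        -reducedNorm x₂ + reducedTrace x₂ * (reducedTrace x₂ / 2) := by
      field_simp
      linear_combination -hd
    exact ⟨k, _, _, inferInstance, inferInstance, by simp,
      .of_root_of_quaternion hd₁ hx₁ (by rwa [htr, hn]), .of_root_of_quaternion hd₂ hx₂ hθ⟩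

theorem SeparablyLinked.of_commute (hd₁ : q₁ ^ 2 + 4 * p₁ ≠ 0) (hd₂ : q₂ ^ 2 + 4 * p₂ ≠ 0)
    (hβ₁ : β₁ ≠ 0) (hβ₂ : β₂ ≠ 0) {x y : ℍ[k,p₂,q₂,β₂]} (hxy : x * y = y * x)
    (h : x * x + q₁ • (x * y) - p₁ • (y * y) = algebraMap k _ β₁) :
    SeparablyLinked p₁ q₁ β₁ p₂ q₂ β₂ := by
  obtain ⟨x₂, hx₂, hnorm⟩ := exists_isQuadraticNorm_of_commute hd₂ hβ₂ hxy h
  obtain hk | ⟨x₁, hx₁, htr, hn⟩ := hnorm.exists_reducedTrace_reducedNorm_eq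
  · exact .of_isQuadraticNorm_left hd₂ hk
  · exact .of_reducedTrace_eq_of_reducedNorm_eq hd₁ hd₂ hβ₁ hβ₂ hx₁ hx₂ htr
      (hn.trans (neg_neg _))

end Linked

/-! ### Commuting quaternion actions -/

theorem two_dvd_finrank_of_semilinear_sq {D : Type*} [DivisionRing D] {σ : D →+* D} {β : D}
    (hβ : ∀ d, σ d * d ≠ β) {V : Type*} [AddCommGroup V] [Module D V] [Module.Finite D V]
    (φ : V →ₛₗ[σ] V) (hφ : ∀ v, φ (φ v) = β • v) : 2 ∣ Module.finrank D V := by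
  induction hn : Module.finrank D V using Nat.strong_induction_on generalizing V with
  | _ n ih =>
  subst hn
  rcases subsingleton_or_nontrivial V with h | h
  · simp [Module.finrank_zero_of_subsingleton]
  obtain ⟨v, hv⟩ := exists_ne (0 : V)
  have hli : LinearIndependent D ![v, φ v] := by
    rw [LinearIndependent.pair_iff' hv]
    intro d hd
    have hsq := hφ v
    rw [← hd, map_smulₛₗ, ← hd, smul_smul] at hsq
    exact hβ d (smul_left_injective D hv hsq)
  let W : Submodule D V := Submodule.span D (Set.range ![v, φ v])
  have hWrank : Module.finrank D W = 2 := by simpa using finrank_span_eq_card hli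
  have hWφ : W ≤ W.comap φ := by
    refine Submodule.span_le.mpr (Set.range_subset_iff.mpr fun i => ?_)
    fin_cases i
    · exact Submodule.subset_span ⟨1, rfl⟩
    · change φ (φ v) ∈ W
      exact hφ v ▸ W.smul_mem β (Submodule.subset_span ⟨0, rfl⟩)
  have hq := W.finrank_quotient_add_finrank
  have hdvd : 2 ∣ Module.finrank D (V ⧸ W) := by
    refine ih _ (by omega) (W.mapQ W φ hWφ) (fun x => ?_) rfl
    obtain ⟨x, rfl⟩ := Submodule.Quotient.mk_surjective W x
    simp only [Submodule.mapQ_apply, hφ, Submodule.Quotient.mk_smul]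
  omega

/-- The quaternion algebra `(a, b, c)` over `k` after extension of scalars to `k[ω]`,
`ω² = p + qω`. Its elements are written `x.rePart + ω * x.imPart` with quaternions over `k`. -/
abbrev ExtendedQuaternion {k : Type*} [CommRing k] (p q a b c : k) : Type _ :=
  ℍ[QuadraticAlgebra k p q, algebraMap k (QuadraticAlgebra k p q) a,
    algebraMap k (QuadraticAlgebra k p q) b, algebraMap k (QuadraticAlgebra k p q) c]

namespace ExtendedQuaternion

variable {k : Type*} [CommRing k] {p q a b c : k}

/-- The `k`-quaternion formed by the `1`-coordinates of the coefficients. -/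
@[simps]
def rePart (x : ExtendedQuaternion p q a b c) : ℍ[k,a,b,c] :=
  ⟨x.re.re, x.imI.re, x.imJ.re, x.imK.re⟩

/-- The `k`-quaternion formed by the `ω`-coordinates of the coefficients. -/
@[simps]
def imPart (x : ExtendedQuaternion p q a b c) : ℍ[k,a,b,c] :=
  ⟨x.re.im, x.imI.im, x.imJ.im, x.imK.im⟩

theorem conj_algebraMap (r : k) :
    starRingEnd (QuadraticAlgebra k p q) (algebraMap k _ r) = algebraMap k _ r := by
  ext <;> simp [starRingEnd_apply]

/-- The conjugation `ω ↦ q - ω` of `k[ω]`, extended to quaternions coefficientwise. -/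
def conj : ExtendedQuaternion p q a b c →+* ExtendedQuaternion p q a b c :=
  mapQuaternion (starRingEnd _) (conj_algebraMap a) (conj_algebraMap b) (conj_algebraMap c)

theorem rePart_mul (x y : ExtendedQuaternion p q a b c) :
    (x * y).rePart = x.rePart * y.rePart + p • (x.imPart * y.imPart) := by
  ext <;> simp <;> ring

theorem imPart_mul (x y : ExtendedQuaternion p q a b c) :
    (x * y).imPart =
      x.rePart * y.imPart + x.imPart * y.rePart + q • (x.imPart * y.imPart) := by
  ext <;> simp <;> ring

theorem rePart_conj (x : ExtendedQuaternion p q a b c) :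
    (conj x).rePart = x.rePart + q • x.imPart := by
  ext <;> simp [conj, starRingEnd_apply]

theorem imPart_conj (x : ExtendedQuaternion p q a b c) : (conj x).imPart = -x.imPart := by
  ext <;> simp [conj, starRingEnd_apply]

theorem rePart_algebraMap (r : k) :
    (algebraMap k (ExtendedQuaternion p q a b c) r).rePart = algebraMap k _ r := by
  ext <;> simp [Algebra.algebraMap_eq_smul_one]

theorem imPart_algebraMap (r : k) :
    (algebraMap k (ExtendedQuaternion p q a b c) r).imPart = 0 := by
  ext <;> simp [Algebra.algebraMap_eq_smul_one]

/-- The extension of a `k`-algebra homomorphism `f` on quaternions that sends `ω` to an element `i`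
commuting with the image of `f`. -/
def lift {A : Type*} [Ring A] [Algebra k A] (f : ℍ[k,a,b,c] →ₐ[k] A) (i : A)
    (hi : i * i = p • 1 + q • i) (hcomm : ∀ x, Commute i (f x)) :
    ExtendedQuaternion p q a b c →ₐ[k] A :=
  AlgHom.ofLinearMap
    { toFun := fun x => f x.rePart + i * f x.imPart
      map_add' := fun x y => by
        rw [show (x + y).rePart = x.rePart + y.rePart from rfl,
          show (x + y).imPart = x.imPart + y.imPart from rfl, map_add, map_add, mul_add]
        exact add_add_add_comm _ _ _ _
      map_smul' := fun r x => by
        rw [show (r • x).rePart = r • x.rePart from rfl,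
          show (r • x).imPart = r • x.imPart from rfl, map_smul, map_smul, mul_smul_comm,
          ← smul_add, RingHom.id_apply] }
    (by
      change f 1 + i * f 0 = 1
      rw [map_one, map_zero, mul_zero, add_zero])
    (fun x y => by
      change f (x * y).rePart + i * f (x * y).imPart =
        (f x.rePart + i * f x.imPart) * (f y.rePart + i * f y.imPart)
      have hre : f x.rePart * (i * f y.imPart) = i * (f x.rePart * f y.imPart) := by
        rw [← mul_assoc, ← (hcomm x.rePart).eq, mul_assoc]
      have him : i * f x.imPart * (i * f y.imPart) = i * i * (f x.imPart * f y.imPart) := by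
        rw [mul_assoc, ← mul_assoc (f x.imPart), ← (hcomm x.imPart).eq]
        simp only [mul_assoc]
      rw [rePart_mul, imPart_mul, add_mul, mul_add, mul_add, hre, him, hi]
      simp only [map_add, map_mul, map_smul, add_mul, mul_add, smul_mul_assoc, mul_smul_comm,
        one_mul, mul_assoc]
      abel)

theorem lift_apply {A : Type*} [Ring A] [Algebra k A] (f : ℍ[k,a,b,c] →ₐ[k] A) (i : A)
    (hi : i * i = p • 1 + q • i) (hcomm : ∀ x, Commute i (f x))
    (x : ExtendedQuaternion p q a b c) : lift f i hi hcomm x = f x.rePart + i * f x.imPart :=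
  rfl

theorem mul_lift {A : Type*} [Ring A] [Algebra k A] {f : ℍ[k,a,b,c] →ₐ[k] A} {i j : A}
    (hi : i * i = p • 1 + q • i) (hcomm : ∀ x, Commute i (f x)) (hji : j * i = q • j - i * j)
    (hj : ∀ x, Commute j (f x)) (x : ExtendedQuaternion p q a b c) :
    j * lift f i hi hcomm x = lift f i hi hcomm (conj x) * j := by
  rw [lift_apply, lift_apply, rePart_conj, imPart_conj, mul_add, ← mul_assoc, hji, sub_mul,
    smul_mul_assoc, mul_assoc, (hj _).eq, (hj _).eq, map_add, map_smul, map_neg]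
  simp only [add_mul, mul_neg, neg_mul, smul_mul_assoc, mul_assoc]
  abel

end ExtendedQuaternion

theorem four_dvd_finrank_of_quaternion_action {k A V : Type*} [Field k] [Ring A] [Algebra k A]
    [AddCommGroup V] [Module k V] [Module A V] [IsScalarTower k A V] {a b c : k}
    (hunit : ∀ x : ℍ[k,a,b,c], IsUnit x ∨ x = 0) (f : ℍ[k,a,b,c] →ₐ[k] A) :
    4 ∣ Module.finrank k V := by
  let : DivisionRing ℍ[k,a,b,c] := DivisionRing.ofIsUnitOrEqZero hunit
  let : Module ℍ[k,a,b,c] V := Module.compHom V (f : ℍ[k,a,b,c] →+* A)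
  have : IsScalarTower k ℍ[k,a,b,c] V := ⟨fun r x v => by
    change f (r • x) • v = r • f x • v
    rw [map_smul, smul_assoc]⟩
  exact ⟨_, by rw [← QuaternionAlgebra.finrank_eq_four a b c, Module.finrank_mul_finrank k _ V]⟩

theorem finrank_extendedQuaternion {k : Type*} [Field k] (p q a b c : k) :
    Module.finrank k (ExtendedQuaternion p q a b c) = 8 := by
  rw [← Module.finrank_mul_finrank k (QuadraticAlgebra k p q), QuadraticAlgebra.finrank_eq_two,
    QuaternionAlgebra.finrank_eq_four]

theorem sixteen_dvd_finrank_of_commuting_actions {k A V : Type*} [Field k] [Ring A] [Algebra k A]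
    [AddCommGroup V] [Module k V] [Module A V] [IsScalarTower k A V] [FiniteDimensional k V]
    {p₁ q₁ β₁ p₂ q₂ β₂ : k}
    (hunit : ∀ x : ExtendedQuaternion p₁ q₁ p₂ q₂ β₂, IsUnit x ∨ x = 0)
    (hβ : ∀ x : ExtendedQuaternion p₁ q₁ p₂ q₂ β₂, x.conj * x ≠ algebraMap k _ β₁)
    (f₁ : ℍ[k,p₁,q₁,β₁] →ₐ[k] A) (f₂ : ℍ[k,p₂,q₂,β₂] →ₐ[k] A)
    (hcomm : ∀ x y, Commute (f₁ x) (f₂ y)) : 16 ∣ Module.finrank k V := by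
  let D := ExtendedQuaternion p₁ q₁ p₂ q₂ β₂
  let B := (QuaternionAlgebra.Basis.self k).compHom f₁
  have hi (y) : Commute B.i (f₂ y) := hcomm _ y
  have hj (y) : Commute B.j (f₂ y) := hcomm _ y
  let f : D →ₐ[k] A := ExtendedQuaternion.lift f₂ B.i B.i_mul_i hi
  have hf (x : D) : B.j * f x = f x.conj * B.j :=
    ExtendedQuaternion.mul_lift B.i_mul_i hi (by rw [B.j_mul_i, B.i_mul_j]) hj x
  let : DivisionRing D := DivisionRing.ofIsUnitOrEqZero hunit
  let : Module D V := Module.compHom V (f : D →+* A)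
  have hsmul (x : D) (v : V) : x • v = f x • v := rfl
  have : IsScalarTower k D V := ⟨fun r x v => by rw [hsmul, hsmul, map_smul, smul_assoc]⟩
  have : Module.Finite D V := .of_restrictScalars_finite k D V
  let φ : V →ₛₗ[(ExtendedQuaternion.conj : D →+* D)] V :=
    { toFun := fun v => B.j • v
      map_add' := smul_add B.j
      map_smul' := fun x v => by rw [hsmul, hsmul, smul_smul, hf, mul_smul] }
  have hφ (v : V) : φ (φ v) = algebraMap k D β₁ • v := by
    change B.j • B.j • v = _
    rw [smul_smul, B.j_mul_j, smul_assoc, one_smul, algebraMap_smul]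
  obtain ⟨m, hm⟩ := two_dvd_finrank_of_semilinear_sq hβ φ hφ
  refine ⟨m, ?_⟩
  rw [← Module.finrank_mul_finrank k D V, finrank_extendedQuaternion, hm]
  ring

section SplitAction

variable {k F : Type*} [CommRing k] [CommRing F]

/-- The conjugation of a quadratic algebra as a linear map. -/
def starLinearMap (a b : F) : QuadraticAlgebra F a b →ₗ[F] QuadraticAlgebra F a b where
  toFun := star
  map_add' := star_add
  map_smul' r v := by ext <;> simp [mul_add, mul_left_comm]

theorem starLinearMap_apply {a b : F} (v : QuadraticAlgebra F a b) :
    starLinearMap a b v = star v :=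
  rfl

/-- An element `z` of norm `c` makes the quaternion algebra `(a, b, c)` act on `F[ω]`: `i` acts as
multiplication by `ω` and `j` as `v ↦ z * star v`. -/
def quaternionBasisOfNorm [Algebra k F] {a b c : k}
    (z : QuadraticAlgebra F (algebraMap k F a) (algebraMap k F b))
    (hz : z.norm = algebraMap k F c) :
    QuaternionAlgebra.Basis
      (Module.End F (QuadraticAlgebra F (algebraMap k F a) (algebraMap k F b))) a b c where
  i := LinearMap.mulLeft F ω
  j := LinearMap.mulLeft F z ∘ₗ starLinearMap _ _
  k := LinearMap.mulLeft F ω ∘ₗ LinearMap.mulLeft F z ∘ₗ starLinearMap _ _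
  i_mul_i := by
    refine LinearMap.ext fun v => ?_
    simp only [Module.End.mul_apply, LinearMap.mulLeft_apply, LinearMap.add_apply,
      LinearMap.smul_apply, Module.End.one_apply]
    rw [← mul_assoc, QuadraticAlgebra.omega_mul_omega_eq_algebraMap]
    simp only [add_mul, smul_mul_assoc, ← Algebra.smul_def, algebraMap_smul]
  j_mul_j := by
    refine LinearMap.ext fun v => ?_
    simp only [Module.End.mul_apply, LinearMap.comp_apply, LinearMap.mulLeft_apply,
      LinearMap.smul_apply, Module.End.one_apply, starLinearMap_apply]
    rw [star_mul, star_star, mul_left_comm, ← QuadraticAlgebra.algebraMap_norm_eq_mul_star, hz,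
      mul_comm, ← Algebra.smul_def, algebraMap_smul]
  i_mul_j := rfl
  j_mul_i := by
    refine LinearMap.ext fun v => ?_
    simp only [Module.End.mul_apply, LinearMap.comp_apply, LinearMap.mulLeft_apply,
      LinearMap.sub_apply, LinearMap.smul_apply, starLinearMap_apply]
    have hω : star (ω : QuadraticAlgebra F (algebraMap k F a) (algebraMap k F b)) =
        algebraMap F _ (algebraMap k F b) - ω := by
      ext <;> simp
    rw [star_mul, hω, ← algebraMap_smul F b, Algebra.smul_def]
    ring

theorem IsQuadraticNorm.nonempty_algHom_end [Algebra k F] {a b c : k}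
    (h : IsQuadraticNorm F a b c) : Nonempty (ℍ[k,a,b,c] →ₐ[k]
      Module.End F (QuadraticAlgebra F (algebraMap k F a) (algebraMap k F b))) := by
  obtain ⟨z, hz⟩ := h
  exact ⟨(quaternionBasisOfNorm z hz).liftHom⟩

end SplitAction

/-! ### Degrees of splitting fields -/

section Divisibility

variable {k : Type u} [Field k] {F : Type*} [Field F] [Algebra k F]

theorem IsQuadraticNorm.two_dvd_finrank {p q β : k} (hd : q ^ 2 + 4 * p ≠ 0)
    (h : ¬ IsQuadraticNorm k p q β) (hF : IsQuadraticNorm F p q β) : 2 ∣ Module.finrank k F := by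
  obtain ⟨f⟩ := hF.nonempty_algHom_end
  have hdvd := four_dvd_finrank_of_quaternion_action
    (V := QuadraticAlgebra F (algebraMap k F p) (algebraMap k F q))
    (isUnit_or_eq_zero_of_forall_norm_ne hd fun z hz => h ⟨z, hz⟩) f
  rw [← Module.finrank_mul_finrank k F, QuadraticAlgebra.finrank_eq_two] at hdvd
  omega

theorem SeparablyLinked.of_conj_mul {p₁ q₁ β₁ p₂ q₂ β₂ : k} (hd₁ : q₁ ^ 2 + 4 * p₁ ≠ 0)
    (hd₂ : q₂ ^ 2 + 4 * p₂ ≠ 0) (hβ₁ : β₁ ≠ 0) (hβ₂ : β₂ ≠ 0)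
    {x : ExtendedQuaternion p₁ q₁ p₂ q₂ β₂} (hx : x.conj * x = algebraMap k _ β₁) :
    SeparablyLinked p₁ q₁ β₁ p₂ q₂ β₂ := by
  have hre := congrArg ExtendedQuaternion.rePart hx
  have him := congrArg ExtendedQuaternion.imPart hx
  rw [ExtendedQuaternion.rePart_mul, ExtendedQuaternion.rePart_conj,
    ExtendedQuaternion.imPart_conj, ExtendedQuaternion.rePart_algebraMap] at hre
  rw [ExtendedQuaternion.imPart_mul, ExtendedQuaternion.rePart_conj,
    ExtendedQuaternion.imPart_conj, ExtendedQuaternion.imPart_algebraMap] at him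
  have hcomm : x.rePart * x.imPart = x.imPart * x.rePart := by
    simp only [add_mul, neg_mul, smul_mul_assoc, smul_neg] at him
    rw [← sub_eq_zero, ← him]
    abel
  refine .of_commute hd₁ hd₂ hβ₁ hβ₂ hcomm ?_
  rw [← hre, hcomm]
  simp only [add_mul, neg_mul, smul_mul_assoc, smul_neg, sub_eq_add_neg]

theorem ExtendedQuaternion.isUnit_or_eq_zero {p₁ q₁ β₁ p₂ q₂ β₂ : k}
    [Fact (∀ r : k, r ^ 2 ≠ p₁ + q₁ * r)] (hd₁ : q₁ ^ 2 + 4 * p₁ ≠ 0)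
    (hd₂ : q₂ ^ 2 + 4 * p₂ ≠ 0) (h : ¬ SeparablyLinked p₁ q₁ β₁ p₂ q₂ β₂)
    (x : ExtendedQuaternion p₁ q₁ p₂ q₂ β₂) : IsUnit x ∨ x = 0 := by
  refine isUnit_or_eq_zero_of_forall_norm_ne (algebraMap_disc_ne_zero hd₂) (fun z hz => h ?_) x
  refine .of_forall_root hd₁ fun K _ _ θ hθ => ⟨.of_root hd₁ hθ, ?_⟩
  have hE : IsQuadraticNorm (QuadraticAlgebra k p₁ q₁) p₂ q₂ β₂ := ⟨z, hz⟩
  refine hE.map (QuadraticAlgebra.lift ⟨θ, ?_⟩)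
  rw [← pow_two, hθ, Algebra.smul_def, Algebra.smul_def, mul_one]

theorem IsQuadraticNorm.four_dvd_finrank [FiniteDimensional k F] {p₁ q₁ β₁ p₂ q₂ β₂ : k}
    (hd₁ : q₁ ^ 2 + 4 * p₁ ≠ 0) (hd₂ : q₂ ^ 2 + 4 * p₂ ≠ 0) (hβ₁ : β₁ ≠ 0) (hβ₂ : β₂ ≠ 0)
    (h : ¬ SeparablyLinked p₁ q₁ β₁ p₂ q₂ β₂)
    (hF₁ : IsQuadraticNorm F p₁ q₁ β₁) (hF₂ : IsQuadraticNorm F p₂ q₂ β₂) :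
    4 ∣ Module.finrank k F := by
  have : Fact (∀ r : k, r ^ 2 ≠ p₁ + q₁ * r) :=
    ⟨fun _ hr => h (.of_isQuadraticNorm_left hd₂ (.of_root hd₁ hr))⟩
  obtain ⟨f₁⟩ := hF₁.nonempty_algHom_end
  obtain ⟨f₂⟩ := hF₂.nonempty_algHom_end
  let U₁ := QuadraticAlgebra F (algebraMap k F p₁) (algebraMap k F q₁)
  let U₂ := QuadraticAlgebra F (algebraMap k F p₂) (algebraMap k F q₂)
  have := Module.Finite.trans (R := k) F (U₁ ⊗[F] U₂)
  have hdvd := sixteen_dvd_finrank_of_commuting_actions (A := Module.End F (U₁ ⊗[F] U₂))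
    (V := U₁ ⊗[F] U₂)
    (ExtendedQuaternion.isUnit_or_eq_zero hd₁ hd₂ h)
    (fun x hx => h (.of_conj_mul hd₁ hd₂ hβ₁ hβ₂ hx))
    (((Module.End.rTensorAlgHom F U₁ U₂).restrictScalars k).comp f₁)
    (((Module.End.lTensorAlgHom F U₂ U₁).restrictScalars k).comp f₂)
    (fun x y => (LinearMap.rTensor_comp_lTensor ..).trans (LinearMap.lTensor_comp_rTensor ..).symm)
  rw [← Module.finrank_mul_finrank k F, Module.finrank_tensorProduct,
    QuadraticAlgebra.finrank_eq_two, QuadraticAlgebra.finrank_eq_two] at hdvd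
  omega

end Divisibility

theorem algebraNorm_quadraticAlgebra {R : Type*} [CommRing R] {a b : R}
    (z : QuadraticAlgebra R a b) : Algebra.norm R z = z.norm :=
  z.det_toLinearMap_eq_norm

/-- Quadratic algebras are compatible with extension of scalars. -/
def baseChangeQuadraticAlgebra (k F : Type*) [CommRing k] [CommRing F] [Algebra k F] (p q : k) :
    F ⊗[k] QuadraticAlgebra k p q ≃ₐ[F]
      QuadraticAlgebra F (algebraMap k F p) (algebraMap k F q) :=
  AlgEquiv.ofAlgHom
    (Algebra.TensorProduct.lift (Algebra.ofId F _)
      (QuadraticAlgebra.lift ⟨ω, by ext <;> simp [Algebra.algebraMap_eq_smul_one]⟩)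
      fun _ _ => .all _ _)
    (QuadraticAlgebra.lift ⟨1 ⊗ₜ ω, by
      rw [Algebra.TensorProduct.tmul_mul_tmul, QuadraticAlgebra.omega_mul_omega_eq_add]
      simp [tmul_add, Algebra.TensorProduct.one_def]⟩)
    (by ext <;> simp)
    (by ext; simp)

theorem isBaseNorm_iff_isQuadraticNorm {k L F : Type} [Field k] [Field L] [Field F] [Algebra k L]
    [Algebra k F] {p q β : k} (e : L ≃ₐ[k] QuadraticAlgebra k p q) (hβ : β ≠ 0) :
    IsBaseNorm k L F β ↔ IsQuadraticNorm F p q β := by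
  let := Algebra.TensorProduct.rightAlgebra (R := k) (A := L) (B := F)
  let E : L ⊗[k] F ≃ₐ[F] QuadraticAlgebra F (algebraMap k F p) (algebraMap k F q) :=
    (Algebra.TensorProduct.commRight k F L).symm.trans
      ((Algebra.TensorProduct.congr .refl e).trans (baseChangeQuadraticAlgebra k F p q))
  have norm_E (x : L ⊗[k] F) : (E x).norm = Algebra.norm F x := by
    rw [← algebraNorm_quadraticAlgebra, Algebra.norm_eq_of_algEquiv]
  constructor
  · rintro ⟨x, hx⟩
    exact ⟨E x, (norm_E x).trans hx⟩
  · rintro ⟨z, hz⟩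
    have hz_unit : IsUnit z := by
      rw [QuadraticAlgebra.isUnit_iff_norm_isUnit, hz]
      exact (isUnit_iff_ne_zero.mpr hβ).map _
    refine ⟨(hz_unit.map E.symm).unit, ?_⟩
    exact (norm_E _).symm.trans (by rw [IsUnit.unit_spec, E.apply_symm_apply, hz])

section Minimal

variable {k : Type u} [Field k] {p₁ q₁ β₁ p₂ q₂ β₂ : k}

theorem exists_isSeparable_isQuadraticNorm_finrank_dvd_four (hd₁ : q₁ ^ 2 + 4 * p₁ ≠ 0)
    (hd₂ : q₂ ^ 2 + 4 * p₂ ≠ 0) (β₁ β₂ : k) :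
    ∃ (F : Type u) (_ : Field F) (_ : Algebra k F), Algebra.IsSeparable k F ∧ Module.Finite k F ∧
      Module.finrank k F ∣ 4 ∧ IsQuadraticNorm F p₁ q₁ β₁ ∧ IsQuadraticNorm F p₂ q₂ β₂ := by
  obtain ⟨K, _, _, _, _, hK, θ₁, hθ₁⟩ := exists_isSeparable_root hd₁
  obtain ⟨F, _, _, _, _, hF, θ₂, hθ₂⟩ :=
    exists_isSeparable_root (algebraMap_disc_ne_zero (F := K) hd₂)
  let : Algebra k F := ((algebraMap K F).comp (algebraMap k K)).toAlgebra
  have : IsScalarTower k K F := .of_algebraMap_eq fun _ => rfl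
  refine ⟨F, ‹_›, ‹_›, .trans k K F, .trans K F, ?_, ?_, ?_⟩
  · rw [← Module.finrank_mul_finrank k K F]
    exact mul_dvd_mul hK hF
  · exact (IsQuadraticNorm.of_root hd₁ hθ₁).map (IsScalarTower.toAlgHom k K F)
  · exact isQuadraticNorm_algebraMap_iff.mp
      (.of_root (algebraMap_disc_ne_zero hd₂) hθ₂ (β := algebraMap k K β₂))

theorem exists_isSeparable_isQuadraticNorm_finrank_dvd (hd₁ : q₁ ^ 2 + 4 * p₁ ≠ 0)
    (hd₂ : q₂ ^ 2 + 4 * p₂ ≠ 0) (hβ₁ : β₁ ≠ 0) (hβ₂ : β₂ ≠ 0) :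
    ∃ (F : Type u) (_ : Field F) (_ : Algebra k F), Algebra.IsSeparable k F ∧ Module.Finite k F ∧
      IsQuadraticNorm F p₁ q₁ β₁ ∧ IsQuadraticNorm F p₂ q₂ β₂ ∧
      ∀ (F' : Type v) [Field F'] [Algebra k F'] [FiniteDimensional k F'],
        IsQuadraticNorm F' p₁ q₁ β₁ → IsQuadraticNorm F' p₂ q₂ β₂ →
        Module.finrank k F ∣ Module.finrank k F' := by
  by_cases hk : IsQuadraticNorm k p₁ q₁ β₁ ∧ IsQuadraticNorm k p₂ q₂ β₂
  · refine ⟨k, _, _, inferInstance, inferInstance, hk.1, hk.2, fun F' _ _ _ _ _ => ?_⟩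
    exact (Module.finrank_self k).symm ▸ one_dvd _
  by_cases hlink : SeparablyLinked p₁ q₁ β₁ p₂ q₂ β₂
  · obtain ⟨K, _, _, hsep, hfin, hK, hK₁, hK₂⟩ := hlink
    refine ⟨K, _, _, hsep, hfin, hK₁, hK₂, fun F' _ _ _ hF₁ hF₂ => hK.trans ?_⟩
    rcases not_and_or.mp hk with hk₁ | hk₂
    · exact hF₁.two_dvd_finrank hd₁ hk₁
    · exact hF₂.two_dvd_finrank hd₂ hk₂
  · obtain ⟨F, _, _, hsep, hfin, hF, hF₁, hF₂⟩ :=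
      exists_isSeparable_isQuadraticNorm_finrank_dvd_four hd₁ hd₂ β₁ β₂
    exact ⟨F, _, _, hsep, hfin, hF₁, hF₂, fun F' _ _ _ hF'₁ hF'₂ =>
      hF.trans (IsQuadraticNorm.four_dvd_finrank hd₁ hd₂ hβ₁ hβ₂ hlink hF'₁ hF'₂)⟩

end Minimal

theorem stmt4_general (k L₁ L₂ : Type) [Field k] [Field L₁] [Field L₂] [Algebra k L₁]
    [Algebra k L₂] [Algebra.IsSeparable k L₁] [Algebra.IsSeparable k L₂]
    (h1 : Module.finrank k L₁ = 2) (h2 : Module.finrank k L₂ = 2) (β₁ β₂ : kˣ) :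
    ∃ (F : Type) (_ : Field F) (_ : Algebra k F),
      FiniteDimensional k F ∧ Algebra.IsSeparable k F ∧
      IsBaseNorm k L₁ F (β₁ : k) ∧ IsBaseNorm k L₂ F (β₂ : k) ∧
      ∀ (F' : Type) (_ : Field F') (_ : Algebra k F'), FiniteDimensional k F' →
        IsBaseNorm k L₁ F' (β₁ : k) → IsBaseNorm k L₂ F' (β₂ : k) →
        Module.finrank k F ∣ Module.finrank k F' := by
  obtain ⟨p₁, q₁, hd₁, ⟨e₁⟩⟩ := exists_algEquiv_quadraticAlgebra h1
  obtain ⟨p₂, q₂, hd₂, ⟨e₂⟩⟩ := exists_algEquiv_quadraticAlgebra h2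
  simp only [isBaseNorm_iff_isQuadraticNorm e₁ β₁.ne_zero,
    isBaseNorm_iff_isQuadraticNorm e₂ β₂.ne_zero]
  obtain ⟨F, _, _, hsep, hfin, hF₁, hF₂, hmin⟩ :=
    exists_isSeparable_isQuadraticNorm_finrank_dvd hd₁ hd₂ β₁.ne_zero β₂.ne_zero
  exact ⟨F, _, _, hfin, hsep, hF₁, hF₂, fun F' _ _ _ => hmin F'⟩

theorem stmt4 (k ks : Type) [Field k] [Field ks] [Algebra k ks] [IsSepClosure k ks]
    (L₁ L₂ : IntermediateField k ks)
    (h1 : Module.finrank k L₁ = 2) (h2 : Module.finrank k L₂ = 2)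
    (β₁ β₂ : kˣ) :
    ∃ (F : Type) (_ : Field F) (_ : Algebra k F),
      FiniteDimensional k F ∧ Algebra.IsSeparable k F ∧
      IsBaseNorm k L₁ F (β₁ : k) ∧ IsBaseNorm k L₂ F (β₂ : k) ∧
      ∀ (F' : Type) (_ : Field F') (_ : Algebra k F'),
        FiniteDimensional k F' → Algebra.IsSeparable k F' →
        IsBaseNorm k L₁ F' (β₁ : k) → IsBaseNorm k L₂ F' (β₂ : k) →
        Module.finrank k F ∣ Module.finrank k F' := by
  have : Algebra.IsSeparable k ks := IsSepClosure.separable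
  obtain ⟨F, _, _, hfin, hsep, hF₁, hF₂, hmin⟩ := stmt4_general k L₁ L₂ h1 h2 β₁ β₂
  exact ⟨F, _, _, hfin, hsep, hF₁, hF₂, fun F' _ _ hfin' _ => hmin F' _ _ hfin'⟩
end
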